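/- Let ε > 0 and let A₁, A₂ ⊆ Ĉ be open, nonempty, disjoint sets with common boundary J satisfying ∂A₁ = ∂A₂ = J and Ĉ = A₁ ⊔ A₂ ⊔ J. Then there exist a rational map r : Ĉ → Ĉ and two distinct fixed points w₁, w₂ of r such that, setting 𝒜ᵢ := {z ∈ Ĉ : the iterates r^[n](z) converge to wᵢ as n → ∞} for i = 1, 2 and 𝒥 := Ĉ \ (𝒜₁ ∪ 𝒜₂), the sets 𝒜₁ and 𝒜₂ are open and disjoint, ∂𝒜₁ = ∂𝒜₂ = 𝒥, and the Hausdorff distances satisfy d_H(Aᵢ, 𝒜ᵢ) < ε for i = 1, 2 and d_H(J, 𝒥) < ε. Moreover, if A₁ has finitely many connected components, P ⊆ A₁ contains exactly one point from each component of A₁, and p ∈ P, then r may be chosen so that r(p) = p, r⁻¹({p}) = P, w₁ = p, and 𝒜₁ is the basin {z : r^[n](z) → p}. -/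

import Mathlib

open Set Metric Topology Filter Polynomial

noncomputable section

/-- A Jordan curve: a set homeomorphic to the unit circle. -/
def IsJordanCurve {X : Type*} [TopologicalSpace X] (E : Set X) : Prop :=
  Nonempty (E ≃ₜ (Metric.sphere (0 : ℂ) 1 : Set ℂ))

/-- A simple arc: a set homeomorphic to the open unit interval `(0,1)`. -/
def IsSimpleArc {X : Type*} [TopologicalSpace X] (E : Set X) : Prop :=
  Nonempty (E ≃ₜ (Set.Ioo (0 : ℝ) 1 : Set ℝ))

/-- The connected components of a set. -/
def setComponents {X : Type*} [TopologicalSpace X] (A : Set X) : Set (Set X) :=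
  {C | ∃ x ∈ A, C = connectedComponentIn A x}

/-- The edges of the pair `(G, V)`: the connected components of `G \ V`. -/
def graphEdges {X : Type*} [TopologicalSpace X] (G V : Set X) : Set (Set X) :=
  setComponents (G \ V)

/-- The degree of a vertex `v`: the number of edges `e` with `v ∈ closure e \ e`,
where an edge is counted twice if `closure e \ e = {v}`. -/
def vertexDegree {X : Type*} [TopologicalSpace X] (G V : Set X) (v : X) : ℕ :=
  {e ∈ graphEdges G V | v ∈ closure e \ e}.ncard +
    {e ∈ graphEdges G V | closure e \ e = {v}}.ncard

/-- `G` is a lemniscate graph with (finite) vertex set `V`. -/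
structure IsLemniscateGraphWith {X : Type*} [TopologicalSpace X] (G V : Set X) : Prop where
  vertex_subset : V ⊆ G
  vertex_finite : V.Finite
  edges_finite : (graphEdges G V).Finite
  edge_shape : ∀ e ∈ graphEdges G V, IsJordanCurve e ∨ (IsSimpleArc e ∧ closure e \ e ⊆ V)
  degree_even : ∀ v ∈ V, Even (vertexDegree G V v)
  degree_ge_four : ∀ v ∈ V, 4 ≤ vertexDegree G V v

/-- `G` is a lemniscate graph (for some finite vertex set). -/
def IsLemniscateGraph {X : Type*} [TopologicalSpace X] (G : Set X) : Prop :=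
  ∃ V, IsLemniscateGraphWith G V

/-- The faces of `G`: the connected components of the complement of `G`. -/
def graphFaces {X : Type*} [TopologicalSpace X] (G : Set X) : Set (Set X) :=
  setComponents Gᶜ

/-- A 2-coloring of the faces of `G`, recorded by the set `grey` of grey faces:
two distinct faces whose closures share a common edge get different colors. -/
def IsTwoColoring {X : Type*} [TopologicalSpace X] (G V : Set X) (grey : Set (Set X)) : Prop :=
  grey ⊆ graphFaces G ∧
    ∀ F₁ ∈ graphFaces G, ∀ F₂ ∈ graphFaces G, F₁ ≠ F₂ →
      (∃ e ∈ graphEdges G V, e ⊆ closure F₁ ∧ e ⊆ closure F₂) →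
      (F₁ ∈ grey ↔ F₂ ∉ grey)

/-- The distance function of a metric space structure on the Riemann sphere. -/
def mdist (m : MetricSpace (OnePoint ℂ)) : OnePoint ℂ → OnePoint ℂ → ℝ :=
  m.toPseudoMetricSpace.toDist.dist

/-- The metric space structure `m` induces the standard topology of the Riemann sphere. -/
def InducesSphereTopology (m : MetricSpace (OnePoint ℂ)) : Prop :=
  m.toPseudoMetricSpace.toUniformSpace.toTopologicalSpace =
    (inferInstance : TopologicalSpace (OnePoint ℂ))

/-- `E` and `F` are `ε`-homeomorphic with respect to the metric `m`: there is a
homeomorphism of the sphere carrying `E` to `F` and moving points less than `ε`. -/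
def EpsHomeomorphic (m : MetricSpace (OnePoint ℂ)) (ε : ℝ) (E F : Set (OnePoint ℂ)) : Prop :=
  ∃ φ : OnePoint ℂ ≃ₜ OnePoint ℂ, φ '' E = F ∧ ∃ c < ε, ∀ z, mdist m (φ z) z ≤ c

/-- `r` is a rational map on the Riemann sphere: the continuous extension of `p/q`
for coprime polynomials `p`, `q`, not both constant. -/
def IsRationalMap (r : OnePoint ℂ → OnePoint ℂ) : Prop :=
  Continuous r ∧ ∃ p q : ℂ[X], IsCoprime p q ∧ ¬(p.natDegree = 0 ∧ q.natDegree = 0) ∧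
    ∀ z : ℂ, q.eval z ≠ 0 → r (z : OnePoint ℂ) = ((p.eval z / q.eval z : ℂ) : OnePoint ℂ)

/-- The lemniscate of `r` : the preimage of the unit circle. -/
def lemniscate (r : OnePoint ℂ → OnePoint ℂ) : Set (OnePoint ℂ) :=
  r ⁻¹' ((fun w : ℂ => (w : OnePoint ℂ)) '' {w : ℂ | ‖w‖ = 1})

/-- The copy of a planar set inside the Riemann sphere. -/
def toSphere (s : Set ℂ) : Set (OnePoint ℂ) := (fun z : ℂ => (z : OnePoint ℂ)) '' s


/-- The basin of attraction of the point `w` for the map `r`. -/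
def basin (r : OnePoint ℂ → OnePoint ℂ) (w : OnePoint ℂ) : Set (OnePoint ℂ) :=
  {z | Tendsto (fun n => r^[n] z) atTop (𝓝 w)}

/-- The conclusion of the Julia set approximation theorem: the two basins are open,
disjoint, share the common boundary `𝒥 := Ĉ \ (𝒜₁ ∪ 𝒜₂)`, and `𝒜₁, 𝒜₂, 𝒥`
approximate `A₁, A₂, J` in Hausdorff distance (with respect to the metric `m`). -/
def GoodBasins (m : MetricSpace (OnePoint ℂ)) (ε : ℝ) (A₁ A₂ J : Set (OnePoint ℂ))
    (r : OnePoint ℂ → OnePoint ℂ) (w₁ w₂ : OnePoint ℂ) : Prop :=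
  IsOpen (basin r w₁) ∧ IsOpen (basin r w₂) ∧ Disjoint (basin r w₁) (basin r w₂) ∧
  frontier (basin r w₁) = (basin r w₁ ∪ basin r w₂)ᶜ ∧
  frontier (basin r w₂) = (basin r w₁ ∪ basin r w₂)ᶜ ∧
  @Metric.hausdorffDist _ m.toPseudoMetricSpace A₁ (basin r w₁) < ε ∧
  @Metric.hausdorffDist _ m.toPseudoMetricSpace A₂ (basin r w₂) < ε ∧
  @Metric.hausdorffDist _ m.toPseudoMetricSpace J ((basin r w₁ ∪ basin r w₂)ᶜ) < ε

/-!
Let `C ⊆ A₁` be compact, containing all of `A₁` away from a thin neighbourhood of `J` and a point of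
`A₁` near each point of `J`. If two disjoint open sets contain `C` and `A₂` respectively, then
together with the complement of their union they are close to `A₁`, `A₂` and `J`, so it suffices to
find such basins. Each component `U` of `A₁` meeting `C` receives one pole `q ∈ U`, and Hilbert's
lemniscate theorem in a Möbius coordinate with pole at `q` gives a principal part at `q` that is
tiny off `U` and huge on `C ∩ U`. The sum `R` of these principal parts, normalized to vanish at
some `b ∉ A₁`, is large on `C` and small off `A₁`. With infinity as one of the poles, the map
`R ^ n + b` has attracting fixed points at infinity and at `b`. Scaled so that no critical point
lies on `‖R‖ = 1`, for large `n` it expands wherever `R ^ n` is neither small nor large, since there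
`‖R‖` is close to `1`; so by Cauchy's estimate every point outside both basins lies in the closure
of each. A Möbius conjugation moves infinity to the prescribed fixed point `p`.
-/

/-! ### Approximation in the Hausdorff distance -/

instance : LocallyConnectedSpace (OnePoint ℂ) := by
  have : Fact (Module.finrank ℝ (EuclideanSpace ℝ (Fin 3)) = 2 + 1) := ⟨by simp⟩
  have : LocallyConnectedSpace (sphere (0 : EuclideanSpace ℝ (Fin 3)) 1) :=
    ChartedSpace.locallyConnectedSpace (EuclideanSpace ℝ (Fin 2)) _
  exact (onePointEquivSphereOfFinrankEq (ι := Fin 3) (V := ℂ) (by simp)).locallyConnectedSpace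

theorem hausdorffDist_le_of_sdiff_sUnion_eq {X : Type*} [PseudoMetricSpace X] {𝒱 : Set (Set X)}
    {δ : ℝ} {A B : Set X} (hδ : 0 ≤ δ) (hdist : ∀ V ∈ 𝒱, ∀ x ∈ V, ∀ y ∈ V, dist x y ≤ δ)
    (hA : ∀ V ∈ 𝒱, (V ∩ A).Nonempty) (hB : ∀ V ∈ 𝒱, (V ∩ B).Nonempty)
    (hAB : A \ ⋃₀ 𝒱 = B \ ⋃₀ 𝒱) : hausdorffDist A B ≤ δ := by
  have key : ∀ S T : Set X, (∀ V ∈ 𝒱, (V ∩ T).Nonempty) → S \ ⋃₀ 𝒱 = T \ ⋃₀ 𝒱 →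
      ∀ x ∈ S, ∃ y ∈ T, dist x y ≤ δ := by
    intro S T hT hST x hx
    by_cases hxV : x ∈ ⋃₀ 𝒱
    · obtain ⟨V, hV, hxV⟩ := hxV
      obtain ⟨y, hyV, hyT⟩ := hT V hV
      exact ⟨y, hyT, hdist V hV x hxV y hyV⟩
    · exact ⟨x, (hST.subset ⟨hx, hxV⟩).1, by rwa [dist_self]⟩
  exact hausdorffDist_le_of_mem_dist hδ (key A B hB hAB) (key B A hA hAB.symm)

theorem exists_finite_isConnected_cover {X : Type*} [PseudoMetricSpace X] [CompactSpace X]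
    [LocallyConnectedSpace X] {δ : ℝ} (hδ : 0 < δ) :
    ∃ 𝒱 : Set (Set X), 𝒱.Finite ∧ ⋃₀ 𝒱 = univ ∧ (∀ V ∈ 𝒱, IsOpen V ∧ IsConnected V) ∧
      ∀ V ∈ 𝒱, ∀ x ∈ V, ∀ y ∈ V, dist x y ≤ δ := by
  have hnhd : ∀ x : X, ∃ V ⊆ ball x (δ / 2), IsOpen V ∧ x ∈ V ∧ IsConnected V := fun x =>
    locallyConnectedSpace_iff_subsets_isOpen_isConnected.1 ‹_› x _
      (ball_mem_nhds x (half_pos hδ))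
  choose V hball hopen hmem hconn using hnhd
  obtain ⟨t, ht⟩ := isCompact_univ.elim_finite_subcover V hopen
    (fun x _ => mem_iUnion.2 ⟨x, hmem x⟩)
  refine ⟨V '' t, t.finite_toSet.image V, ?_, forall_mem_image.2 fun x _ => ⟨hopen x, hconn x⟩,
    forall_mem_image.2 fun x _ y hy z hz => ?_⟩
  · rw [sUnion_image]
    exact univ_subset_iff.1 ht
  · have := mem_ball.1 (hball x hy)
    have := mem_ball.1 (hball x hz)
    linarith [dist_triangle_right y z x]

theorem exists_mem_notMem_union_of_isPreconnected {X : Type*} [TopologicalSpace X]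
    {V B₁ B₂ : Set X} (hV : IsPreconnected V) (hB₁ : IsOpen B₁) (hB₂ : IsOpen B₂)
    (hB : Disjoint B₁ B₂) (h₁ : (V ∩ B₁).Nonempty) (h₂ : (V ∩ B₂).Nonempty) :
    (V ∩ (B₁ ∪ B₂)ᶜ).Nonempty := by
  by_contra hempty
  have hsub : V ⊆ B₁ ∪ B₂ := fun z hz => by_contra fun hzB => hempty ⟨z, hz, hzB⟩
  obtain ⟨z, -, hz₁, hz₂⟩ := hV B₁ B₂ hB₁ hB₂ hsub h₁ h₂
  exact disjoint_left.1 hB hz₁ hz₂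

theorem hausdorffDist_le_of_subset_of_isPreconnected {X : Type*} [PseudoMetricSpace X]
    {𝒱 : Set (Set X)} {δ : ℝ} {A₁ A₂ J B₁ B₂ : Set X} (hδ : 0 ≤ δ)
    (hdist : ∀ V ∈ 𝒱, ∀ x ∈ V, ∀ y ∈ V, dist x y ≤ δ) (hconn : ∀ V ∈ 𝒱, IsPreconnected V)
    (hA₁ : ∀ V ∈ 𝒱, (V ∩ A₁).Nonempty) (hA₂ : ∀ V ∈ 𝒱, (V ∩ A₂).Nonempty)
    (hJ : ∀ V ∈ 𝒱, (V ∩ J).Nonempty) (hJV : J ⊆ ⋃₀ 𝒱) (hcover : A₁ ∪ A₂ ∪ J = univ)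
    (hB₁ : IsOpen B₁) (hB₂ : IsOpen B₂) (hB : Disjoint B₁ B₂)
    (hmeet : ∀ V ∈ 𝒱, (V ∩ B₁).Nonempty) (hsub₁ : A₁ \ ⋃₀ 𝒱 ⊆ B₁) (hsub₂ : A₂ ⊆ B₂) :
    hausdorffDist A₁ B₁ ≤ δ ∧ hausdorffDist A₂ B₂ ≤ δ ∧ hausdorffDist J (B₁ ∪ B₂)ᶜ ≤ δ := by
  have hmeet₂ : ∀ V ∈ 𝒱, (V ∩ B₂).Nonempty := fun V hV =>
    (hA₂ V hV).mono (inter_subset_inter_right V hsub₂)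
  have hmeetJ : ∀ V ∈ 𝒱, (V ∩ (B₁ ∪ B₂)ᶜ).Nonempty := fun V hV =>
    exists_mem_notMem_union_of_isPreconnected (hconn V hV) hB₁ hB₂ hB (hmeet V hV) (hmeet₂ V hV)
  have hout : ∀ x ∉ ⋃₀ 𝒱, (x ∈ A₁ ↔ x ∈ B₁) ∧ (x ∈ A₂ ↔ x ∈ B₂) ∧ (x ∈ J ↔ x ∈ (B₁ ∪ B₂)ᶜ) := by
    intro x hx
    have hcov : (x ∈ A₁ ∨ x ∈ A₂) ∨ x ∈ J := hcover.superset (mem_univ x)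
    have hxJ : x ∉ J := fun h => hx (hJV h)
    have hx₁ : x ∈ A₁ → x ∈ B₁ := fun h => hsub₁ ⟨h, hx⟩
    have hx₂ : x ∈ A₂ → x ∈ B₂ := fun h => hsub₂ h
    have hxB : x ∈ B₁ → x ∉ B₂ := fun h => disjoint_left.1 hB h
    simp only [mem_compl_iff, mem_union]
    tauto
  have hsdiff : ∀ {S T : Set X}, (∀ x ∉ ⋃₀ 𝒱, (x ∈ S ↔ x ∈ T)) → S \ ⋃₀ 𝒱 = T \ ⋃₀ 𝒱 :=
    fun h => by ext x; exact and_congr_left (h x)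
  exact ⟨hausdorffDist_le_of_sdiff_sUnion_eq hδ hdist hA₁ hmeet (hsdiff fun x hx => (hout x hx).1),
    hausdorffDist_le_of_sdiff_sUnion_eq hδ hdist hA₂ hmeet₂ (hsdiff fun x hx => (hout x hx).2.1),
    hausdorffDist_le_of_sdiff_sUnion_eq hδ hdist hJ hmeetJ (hsdiff fun x hx => (hout x hx).2.2)⟩

/-- The compact set consists of the part of `A₁` away from a fine cover of `J`, together with a
point of `A₁` in each member of that cover. -/
theorem exists_isCompact_forall_hausdorffDist_lt {X : Type*} [PseudoMetricSpace X] [CompactSpace X]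
    [LocallyConnectedSpace X] {ε : ℝ} (hε : 0 < ε) {A₁ A₂ J : Set X} (h₂ : IsOpen A₂)
    (hdisj : Disjoint A₁ A₂) (hJ₁ : frontier A₁ = J) (hJ₂ : frontier A₂ = J)
    (hcover : A₁ ∪ A₂ ∪ J = univ) :
    ∃ C : Set X, IsCompact C ∧ C ⊆ A₁ ∧ ∀ B₁ B₂ : Set X, IsOpen B₁ → IsOpen B₂ →
      Disjoint B₁ B₂ → C ⊆ B₁ → A₂ ⊆ B₂ →
      hausdorffDist A₁ B₁ < ε ∧ hausdorffDist A₂ B₂ < ε ∧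
        hausdorffDist J (B₁ ∪ B₂)ᶜ < ε := by
  obtain ⟨𝒰, hfin, hcov, hU, hdist⟩ := exists_finite_isConnected_cover (X := X) (half_pos hε)
  set 𝒱 : Set (Set X) := {V ∈ 𝒰 | (V ∩ J).Nonempty}
  have hmeet : ∀ A : Set X, frontier A = J → ∀ V ∈ 𝒱, (V ∩ A).Nonempty := by
    rintro A rfl V ⟨hV, x, hxV, hx⟩
    exact mem_closure_iff.1 hx.1 V (hU V hV).1 hxV
  have hJV : J ⊆ ⋃₀ 𝒱 := fun x hx => by
    obtain ⟨V, hV, hxV⟩ := hcov.superset (mem_univ x)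
    exact ⟨V, ⟨hV, x, hxV, hx⟩, hxV⟩
  have hclosed : IsClosed (A₁ \ ⋃₀ 𝒱) := by
    have hopen : IsOpen (⋃₀ 𝒱 ∪ A₂) := (isOpen_sUnion fun V hV => (hU V hV.1).1).union h₂
    convert hopen.isClosed_compl using 1
    ext x
    have hx : (x ∈ A₁ ∨ x ∈ A₂) ∨ x ∈ J := hcover.superset (mem_univ x)
    have hxJ : x ∈ J → x ∈ ⋃₀ 𝒱 := fun h => hJV h
    have hx₂ : x ∈ A₁ → x ∉ A₂ := fun h => disjoint_left.1 hdisj h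
    simp only [Set.mem_sdiff, mem_compl_iff, mem_union]
    tauto
  choose a ha using hmeet A₁ hJ₁
  have : Finite 𝒱 := (hfin.subset (sep_subset _ _)).to_subtype
  refine ⟨A₁ \ ⋃₀ 𝒱 ∪ range fun V : 𝒱 => a V V.2,
    hclosed.isCompact.union (finite_range _).isCompact,
    union_subset sdiff_subset (range_subset_iff.2 fun V => (ha V V.2).2),
    fun B₁ B₂ hB₁ hB₂ hB hC hA₂ => ?_⟩
  obtain ⟨hle₁, hle₂, hleJ⟩ := hausdorffDist_le_of_subset_of_isPreconnected (half_pos hε).le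
    (fun V hV => hdist V hV.1) (fun V hV => (hU V hV.1).2.isPreconnected) (hmeet A₁ hJ₁)
    (hmeet A₂ hJ₂) (fun V hV => hV.2) hJV hcover hB₁ hB₂ hB
    (fun V hV => ⟨a V hV, (ha V hV).1, hC (Or.inr ⟨⟨V, hV⟩, rfl⟩)⟩)
    (subset_union_left.trans hC) hA₂
  have hlt : ε / 2 < ε := half_lt_self hε
  exact ⟨hle₁.trans_lt hlt, hle₂.trans_lt hlt, hleJ.trans_lt hlt⟩

/-! ### Fekete points and the growth of polynomials off a compact set -/

section Fekete

variable {X ι : Type*} [Fintype ι] [DecidableEq ι]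

/-- The product of the mutual distances of a finite family of points, each unordered pair being
counted twice. Its maximizers over a compact set are the Fekete points of this set. -/
def mutualDistProd [PseudoMetricSpace X] (x : ι → X) : ℝ :=
  ∏ i, ∏ j ∈ Finset.univ.erase i, dist (x i) (x j)

theorem continuous_mutualDistProd [PseudoMetricSpace X] :
    Continuous (mutualDistProd : (ι → X) → ℝ) := by
  unfold mutualDistProd
  fun_prop

theorem prod_dist_pos [MetricSpace X] {x : ι → X} (hx : Function.Injective x) (i : ι) :
    0 < ∏ j ∈ Finset.univ.erase i, dist (x i) (x j) :=
  Finset.prod_pos fun _ hj => dist_pos.2 (hx.ne (Finset.ne_of_mem_erase hj).symm)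

theorem mutualDistProd_pos_iff [MetricSpace X] {x : ι → X} :
    0 < mutualDistProd x ↔ Function.Injective x := by
  refine ⟨fun hpos i j hij => ?_, fun hx => Finset.prod_pos fun i _ => prod_dist_pos hx i⟩
  by_contra hne
  refine hpos.ne' (Finset.prod_eq_zero (Finset.mem_univ i)
    (Finset.prod_eq_zero (Finset.mem_erase.2 ⟨Ne.symm hne, Finset.mem_univ j⟩) ?_))
  rw [hij, dist_self]

theorem mutualDistProd_eq_sq_mul [PseudoMetricSpace X] (x : ι → X) (i : ι) :
    mutualDistProd x = (∏ j ∈ Finset.univ.erase i, dist (x i) (x j)) ^ 2 *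
      ∏ k ∈ Finset.univ.erase i, ∏ j ∈ (Finset.univ.erase k).erase i, dist (x k) (x j) := by
  have hsplit : ∀ k ∈ Finset.univ.erase i, ∏ j ∈ Finset.univ.erase k, dist (x k) (x j) =
      dist (x i) (x k) * ∏ j ∈ (Finset.univ.erase k).erase i, dist (x k) (x j) := by
    intro k hk
    rw [dist_comm, Finset.mul_prod_erase _ (fun j => dist (x k) (x j))]
    exact Finset.mem_erase.2 ⟨(Finset.ne_of_mem_erase hk).symm, Finset.mem_univ i⟩
  rw [mutualDistProd, ← Finset.mul_prod_erase _ _ (Finset.mem_univ i),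
    Finset.prod_congr rfl hsplit, Finset.prod_mul_distrib]
  ring

theorem mutualDistProd_update [PseudoMetricSpace X] (x : ι → X) (i : ι) (z : X) :
    mutualDistProd (Function.update x i z) = (∏ j ∈ Finset.univ.erase i, dist z (x j)) ^ 2 *
      ∏ k ∈ Finset.univ.erase i, ∏ j ∈ (Finset.univ.erase k).erase i, dist (x k) (x j) := by
  rw [mutualDistProd_eq_sq_mul _ i]
  congr 1
  · congr 1
    refine Finset.prod_congr rfl fun j hj => ?_
    rw [Function.update_self, Function.update_of_ne (Finset.ne_of_mem_erase hj)]
  · refine Finset.prod_congr rfl fun k hk => Finset.prod_congr rfl fun j hj => ?_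
    rw [Function.update_of_ne (Finset.ne_of_mem_erase hk),
      Function.update_of_ne (Finset.ne_of_mem_erase hj)]

theorem exists_fekete_points [MetricSpace X] {K : Set X} (hK : IsCompact K) (hinf : K.Infinite) :
    ∃ x : ι → X, Function.Injective x ∧ (∀ i, x i ∈ K) ∧
      ∀ i, ∀ z ∈ K, ∏ j ∈ Finset.univ.erase i, dist z (x j) ≤
        ∏ j ∈ Finset.univ.erase i, dist (x i) (x j) := by
  have := hinf.to_subtype
  obtain ⟨e⟩ : Nonempty (ι ↪ K) :=
    ⟨(Fintype.equivFin ι).toEmbedding.trans (Fin.valEmbedding.trans (Infinite.natEmbedding K))⟩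
  have he : (fun i => (e i : X)) ∈ univ.pi fun _ : ι => K := fun i _ => (e i).2
  obtain ⟨x, hxK, hmax⟩ := (isCompact_univ_pi fun _ : ι => hK).exists_isMaxOn ⟨_, he⟩
    continuous_mutualDistProd.continuousOn
  have hpos : 0 < mutualDistProd x :=
    (mutualDistProd_pos_iff.2 (Subtype.val_injective.comp e.injective)).trans_le (hmax he)
  refine ⟨x, mutualDistProd_pos_iff.1 hpos, fun i => hxK i (mem_univ i), fun i z hz => ?_⟩
  have hle : mutualDistProd (Function.update x i z) ≤ mutualDistProd x :=
    hmax ((update_mem_pi_iff_of_mem hxK).2 fun _ => hz)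
  rw [mutualDistProd_update, mutualDistProd_eq_sq_mul x i] at hle
  rw [mutualDistProd_eq_sq_mul x i] at hpos
  have hsq := le_of_mul_le_mul_right hle (pos_of_mul_pos_right hpos (sq_nonneg _))
  exact (pow_le_pow_iff_left₀ (Finset.prod_nonneg fun _ _ => dist_nonneg)
    (Finset.prod_nonneg fun _ _ => dist_nonneg) two_ne_zero).1 hsq

end Fekete

section Lagrange

variable {𝕜 ι : Type*} [NormedField 𝕜] [Fintype ι] [DecidableEq ι]

theorem norm_eval_nodal_univ (x : ι → 𝕜) (i : ι) (z : 𝕜) :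
    ‖(Lagrange.nodal Finset.univ x).eval z‖ =
      dist z (x i) * ∏ j ∈ Finset.univ.erase i, dist z (x j) := by
  simp only [dist_eq_norm]
  rw [Lagrange.eval_nodal, norm_prod,
    Finset.mul_prod_erase _ (fun j => ‖z - x j‖) (Finset.mem_univ i)]

theorem norm_eval_lagrangeBasis_univ (x : ι → 𝕜) (i : ι) (z : 𝕜) :
    ‖(Lagrange.basis Finset.univ x i).eval z‖ =
      (∏ j ∈ Finset.univ.erase i, dist z (x j)) /
        ∏ j ∈ Finset.univ.erase i, dist (x i) (x j) := by
  rw [Lagrange.basis, eval_prod, norm_prod, ← Finset.prod_div_distrib]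
  refine Finset.prod_congr rfl fun j _ => ?_
  rw [Lagrange.basisDivisor, eval_mul, eval_C, eval_sub, eval_X, eval_C, norm_mul, norm_inv,
    dist_eq_norm, dist_eq_norm, inv_mul_eq_div]

theorem norm_eval_le_sum_norm_eval_lagrangeBasis {x : ι → 𝕜} (hx : Function.Injective x)
    {P : 𝕜[X]} (hdeg : P.degree < Fintype.card ι) (hP : ∀ i, ‖P.eval (x i)‖ ≤ 1) (z : 𝕜) :
    ‖P.eval z‖ ≤ ∑ i, ‖(Lagrange.basis Finset.univ x i).eval z‖ := by
  rw [Lagrange.eq_interpolate (s := Finset.univ) hx.injOn hdeg, Lagrange.interpolate_apply,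
    eval_finsetSum]
  refine norm_sum_le_of_le _ fun i _ => ?_
  rw [eval_mul, eval_C, norm_mul]
  exact mul_le_of_le_one_left (norm_nonneg _) (hP i)

/-- A weak form of the Bernstein–Walsh inequality, with the normalized nodal polynomial of Fekete
points in place of the Green function of the complement of `K`. -/
theorem exists_polynomial_forall_mul_norm_eval_le {K : Set 𝕜} (hK : IsCompact K)
    (hinf : K.Infinite) {r : ℝ} (hr : ∀ z ∈ K, ‖z‖ ≤ r) {n : ℕ} (hn : 0 < n) :
    ∃ F : 𝕜[X], F.natDegree = n ∧ (∀ z ∈ K, ‖F.eval z‖ ≤ 2 * r) ∧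
      ∀ P : 𝕜[X], P.natDegree < n → (∀ z ∈ K, ‖P.eval z‖ ≤ 1) →
        ∀ δ z, 0 ≤ δ → (∀ x ∈ K, δ ≤ dist z x) → δ * ‖P.eval z‖ ≤ n * ‖F.eval z‖ := by
  obtain ⟨x, hx, hxK, hmax⟩ := exists_fekete_points (ι := Fin n) hK hinf
  obtain ⟨i₀, -, hmin⟩ := Finset.exists_min_image Finset.univ
    (fun i => ∏ j ∈ Finset.univ.erase i, dist (x i) (x j)) ⟨⟨0, hn⟩, Finset.mem_univ _⟩
  set μ : ℝ := ∏ j ∈ Finset.univ.erase i₀, dist (x i₀) (x j)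
  have hμ : 0 < μ := prod_dist_pos hx i₀
  set c : 𝕜 := ∏ j ∈ Finset.univ.erase i₀, (x i₀ - x j)
  have hc : ‖c‖ = μ := by simp only [c, μ, norm_prod, dist_eq_norm]
  have hF : ∀ z i, ‖(C c⁻¹ * Lagrange.nodal Finset.univ x).eval z‖ =
      μ⁻¹ * (dist z (x i) * ∏ j ∈ Finset.univ.erase i, dist z (x j)) := fun z i => by
    rw [eval_mul, eval_C, norm_mul, norm_inv, hc, norm_eval_nodal_univ x i]
  have hprod : ∀ z i, 0 ≤ ∏ j ∈ Finset.univ.erase i, dist z (x j) :=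
    fun z i => Finset.prod_nonneg fun _ _ => dist_nonneg
  refine ⟨C c⁻¹ * Lagrange.nodal Finset.univ x, ?_, fun z hz => ?_, fun P hdeg hP δ z hδ0 hδ => ?_⟩
  · rw [natDegree_C_mul (inv_ne_zero (norm_pos_iff.1 (hc ▸ hμ))), Lagrange.natDegree_nodal,
      Finset.card_fin]
  · have hdist : dist z (x i₀) ≤ 2 * r := by
      rw [dist_eq_norm]
      linarith [norm_sub_le z (x i₀), hr z hz, hr _ (hxK i₀)]
    rw [hF z i₀, inv_mul_le_iff₀ hμ, mul_comm μ]
    exact mul_le_mul hdist (hmax i₀ z hz) (hprod z i₀) (dist_nonneg.trans hdist)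
  · have hbasis : ∀ i, δ * ‖(Lagrange.basis Finset.univ x i).eval z‖ ≤
        ‖(C c⁻¹ * Lagrange.nodal Finset.univ x).eval z‖ := fun i => by
      rw [hF z i, norm_eval_lagrangeBasis_univ, mul_div_assoc', inv_mul_eq_div]
      exact div_le_div₀ (mul_nonneg dist_nonneg (hprod z i))
        (mul_le_mul_of_nonneg_right (hδ _ (hxK i)) (hprod z i)) hμ (hmin i (Finset.mem_univ i))
    calc δ * ‖P.eval z‖
        ≤ δ * ∑ i, ‖(Lagrange.basis Finset.univ x i).eval z‖ := by
          refine mul_le_mul_of_nonneg_left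
            (norm_eval_le_sum_norm_eval_lagrangeBasis hx ?_ (fun i => hP _ (hxK i)) z) hδ0
          exact degree_le_natDegree.trans_lt (by rw [Fintype.card_fin]; exact_mod_cast hdeg)
      _ ≤ ∑ _i : Fin n, ‖(C c⁻¹ * Lagrange.nodal Finset.univ x).eval z‖ := by
          rw [Finset.mul_sum]
          exact Finset.sum_le_sum fun i _ => hbasis i
      _ = n * ‖(C c⁻¹ * Lagrange.nodal Finset.univ x).eval z‖ := by
          rw [Finset.sum_const, Finset.card_fin, nsmul_eq_mul]

end Lagrange

/-! ### Polynomial convexity and the Hilbert lemniscate theorem -/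

/-- The coordinate function in the algebra `P(K)` of uniform limits of polynomials on `K`. A point
outside its spectrum is outside the polynomially convex hull of `K`. -/
def uniformPolyCoord (K : Set ℂ) [CompactSpace K] :
    (polynomialFunctions K).topologicalClosure :=
  ⟨(X : ℂ[X]).toContinuousMapOn K, Subalgebra.le_topologicalClosure _ ⟨X, trivial, rfl⟩⟩

instance (K : Set ℂ) [CompactSpace K] :
    CompleteSpace (polynomialFunctions K).topologicalClosure :=
  (Subalgebra.isClosed_topologicalClosure _).completeSpace_coe

theorem frontier_spectrum_uniformPolyCoord_subset (K : Set ℂ) [CompactSpace K] :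
    frontier (spectrum ℂ (uniformPolyCoord K)) ⊆ K := by
  have : IsClosed ((polynomialFunctions K).topologicalClosure : Set C(K, ℂ)) :=
    Subalgebra.isClosed_topologicalClosure _
  refine (Subalgebra.frontier_spectrum _ (uniformPolyCoord K)).trans ?_
  rw [ContinuousMap.spectrum_eq_range]
  rintro _ ⟨y, rfl⟩
  simp [uniformPolyCoord]

theorem isCompact_spectrum_uniformPolyCoord (K : Set ℂ) [CompactSpace K] :
    IsCompact (spectrum ℂ (uniformPolyCoord K)) :=
  spectrum.isCompact _

theorem exists_polynomial_of_notMem_spectrum {K : Set ℂ} [CompactSpace K] {z₀ : ℂ}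
    (hz₀ : z₀ ∉ spectrum ℂ (uniformPolyCoord K)) {δ : ℝ} (hδ : 0 < δ) :
    ∃ Q : ℂ[X], Q.eval z₀ = 1 ∧ ∀ z ∈ K, ‖Q.eval z‖ < δ := by
  obtain ⟨u, hu⟩ := spectrum.notMem_iff.1 hz₀
  set g : (polynomialFunctions K).topologicalClosure := ↑u⁻¹
  have hmul : (algebraMap ℂ _ z₀ - uniformPolyCoord K) * g = 1 := by rw [← hu, Units.mul_inv]
  set D : C(K, ℂ) → C(K, ℂ) := fun f =>
    1 - ((C z₀ - X : ℂ[X]).toContinuousMapOn K) * f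
  have hD : Continuous D := by fun_prop
  have hg : D g = 0 := by
    ext z
    have := congrArg (fun s : (polynomialFunctions K).topologicalClosure => (s : C(K, ℂ)) z) hmul
    simpa [D, uniformPolyCoord, sub_eq_zero] using this.symm
  obtain ⟨f, hf, P, -, rfl⟩ := mem_closure_iff.1
    (show (g : C(K, ℂ)) ∈ closure (polynomialFunctions K : Set C(K, ℂ)) from g.2)
    _ (isOpen_ball.preimage hD) (by rw [mem_preimage, hg]; exact mem_ball_self hδ)
  refine ⟨1 - (C z₀ - X) * P, by simp, fun z hz => ?_⟩
  have := ((D (P.toContinuousMapOn K)).norm_coe_le_norm ⟨z, hz⟩).trans_lt (mem_ball_zero_iff.1 hf)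
  simpa [D] using this

theorem isCompact_compl_preimage_coe {U : Set (OnePoint ℂ)} (hU : IsOpen U)
    (hinfty : OnePoint.infty ∈ U) : IsCompact {z : ℂ | (z : OnePoint ℂ) ∉ U} :=
  ((OnePoint.isOpen_iff_of_mem hinfty).1 hU).2

theorem notMem_of_frontier_subset {U : Set (OnePoint ℂ)} (hconn : IsPreconnected U)
    (hinfty : OnePoint.infty ∈ U) {σ : Set ℂ} (hσ : IsCompact σ)
    (hfr : ∀ z ∈ frontier σ, (z : OnePoint ℂ) ∉ U) {z : ℂ} (hz : (z : OnePoint ℂ) ∈ U) :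
    z ∉ σ := by
  intro hzσ
  have hint : ∀ w ∈ σ, (w : OnePoint ℂ) ∈ U → w ∈ interior σ := fun w hw hwU =>
    by_contra fun hwi => hfr w ⟨subset_closure hw, hwi⟩ hwU
  have hsub : U ⊆ (↑) '' interior σ ∪ ((↑) '' σ)ᶜ := fun u hu =>
    or_iff_not_imp_right.2 fun hσu => by
      obtain ⟨w, hw, rfl⟩ := not_not.1 hσu
      exact mem_image_of_mem _ (hint w hw hu)
  obtain ⟨y, -, hy, hyσ⟩ := hconn _ _ (OnePoint.isOpen_image_coe.2 isOpen_interior)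
    (OnePoint.isOpen_compl_image_coe.2 ⟨hσ.isClosed, hσ⟩) hsub
    ⟨z, hz, mem_image_of_mem _ (hint z hzσ hz)⟩
    ⟨_, hinfty, OnePoint.infty_notMem_image_coe⟩
  exact hyσ (image_mono interior_subset hy)

theorem exists_polynomial_eval_eq_one {U : Set (OnePoint ℂ)} (hU : IsOpen U)
    (hconn : IsPreconnected U) (hinfty : OnePoint.infty ∈ U) {z₀ : ℂ}
    (hz₀ : (z₀ : OnePoint ℂ) ∈ U) {δ : ℝ} (hδ : 0 < δ) :
    ∃ Q : ℂ[X], Q.eval z₀ = 1 ∧ ∀ z : ℂ, (z : OnePoint ℂ) ∉ U → ‖Q.eval z‖ < δ := by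
  set K : Set ℂ := {z : ℂ | (z : OnePoint ℂ) ∉ U} with hK
  have : CompactSpace K := isCompact_iff_compactSpace.1 (isCompact_compl_preimage_coe hU hinfty)
  have hz₀σ : z₀ ∉ spectrum ℂ (uniformPolyCoord K) :=
    notMem_of_frontier_subset hconn hinfty (isCompact_spectrum_uniformPolyCoord K)
      (fun _ h => hK.subset (frontier_spectrum_uniformPolyCoord_subset K h)) hz₀
  exact exists_polynomial_of_notMem_spectrum hz₀σ hδ

theorem exists_polynomial_of_mem_nhds {U : Set (OnePoint ℂ)} (hU : IsOpen U)
    (hconn : IsPreconnected U) (hinfty : OnePoint.infty ∈ U) {x : OnePoint ℂ} (hx : x ∈ U) :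
    ∃ Q : ℂ[X], (∀ z : ℂ, (z : OnePoint ℂ) ∉ U → ‖Q.eval z‖ ≤ 1) ∧
      ∃ V ∈ 𝓝 x, ∀ z : ℂ, (z : OnePoint ℂ) ∈ V → 2 ≤ ‖Q.eval z‖ := by
  induction x using OnePoint.rec with
  | infty =>
    obtain ⟨r, hr0, hr⟩ :=
      (isCompact_compl_preimage_coe hU hinfty).isBounded.exists_pos_norm_le
    have hQ : ∀ z : ℂ, ‖(C (r⁻¹ : ℂ) * X).eval z‖ = r⁻¹ * ‖z‖ := fun z => by
      rw [eval_mul, eval_C, eval_X, norm_mul, norm_inv, Complex.norm_real,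
        Real.norm_of_nonneg hr0.le]
    refine ⟨C (r⁻¹ : ℂ) * X, fun z hz => ?_, ((↑) '' closedBall (0 : ℂ) (r * 2))ᶜ,
      (OnePoint.isOpen_compl_image_coe.2 ⟨isClosed_closedBall,
        isCompact_closedBall _ _⟩).mem_nhds OnePoint.infty_notMem_image_coe, fun z hz => ?_⟩
    · rw [hQ, inv_mul_le_iff₀ hr0, mul_one]
      exact hr z hz
    · rw [hQ, le_inv_mul_iff₀ hr0]
      by_contra! h
      exact hz (mem_image_of_mem _ (mem_closedBall_zero_iff.2 h.le))
  | coe z₀ =>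
    obtain ⟨Q, hQ₀, hQ⟩ := exists_polynomial_eval_eq_one hU hconn hinfty hx
      (show (0 : ℝ) < 1 / 3 by norm_num)
    have hnorm : ∀ z, ‖(C 3 * Q).eval z‖ = 3 * ‖Q.eval z‖ := fun z => by
      rw [eval_mul, eval_C, norm_mul, Complex.norm_ofNat]
    refine ⟨C 3 * Q, fun z hz => by linarith [hnorm z, hQ z hz],
      (↑) '' {z : ℂ | 2 < ‖(C 3 * Q).eval z‖}, ?_, ?_⟩
    · refine OnePoint.nhds_coe_eq z₀ ▸ image_mem_map (((C 3 * Q).continuous.norm.tendsto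
        z₀).eventually (lt_mem_nhds ?_))
      rw [hnorm, hQ₀, norm_one]
      norm_num
    · rintro z ⟨w, hw, hwz⟩
      exact OnePoint.coe_injective hwz ▸ hw.le

theorem exists_finset_polynomial {U : Set (OnePoint ℂ)} (hU : IsOpen U)
    (hconn : IsPreconnected U) (hinfty : OnePoint.infty ∈ U) {E : Set (OnePoint ℂ)}
    (hE : IsCompact E) (hEU : E ⊆ U) :
    ∃ t : Finset ℂ[X], (∀ Q ∈ t, ∀ z : ℂ, (z : OnePoint ℂ) ∉ U → ‖Q.eval z‖ ≤ 1) ∧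
      ∀ z : ℂ, (z : OnePoint ℂ) ∈ E → ∃ Q ∈ t, 2 ≤ ‖Q.eval z‖ := by
  classical
  choose! Q hQ V hV hQV using fun (x : OnePoint ℂ) (hx : x ∈ E) =>
    exists_polynomial_of_mem_nhds hU hconn hinfty (hEU hx)
  obtain ⟨t, htE, ht⟩ := hE.elim_nhds_subcover V hV
  refine ⟨t.image Q, Finset.forall_mem_image.2 fun x hx => hQ x (htE x hx), fun z hz => ?_⟩
  obtain ⟨x, hx, hzx⟩ := mem_iUnion₂.1 (ht hz)
  exact ⟨Q x, Finset.mem_image_of_mem Q hx, hQV x (htE x hx) z hzx⟩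

theorem infinite_compl_preimage_coe {U : Set (OnePoint ℂ)} (hinfty : OnePoint.infty ∈ U)
    (hinf : Uᶜ.Infinite) : {z : ℂ | (z : OnePoint ℂ) ∉ U}.Infinite := by
  refine fun hfin => hinf ((hfin.image ((↑) : ℂ → OnePoint ℂ)).subset fun x hx => ?_)
  induction x using OnePoint.rec with
  | infty => exact absurd hinfty hx
  | coe z => exact ⟨z, hx, rfl⟩

theorem exists_pos_forall_le_dist {U E : Set (OnePoint ℂ)} (hU : IsOpen U)
    (hinfty : OnePoint.infty ∈ U) (hE : IsClosed E) (hEU : E ⊆ U) :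
    ∃ δ : ℝ, 0 < δ ∧ ∀ z x : ℂ, (z : OnePoint ℂ) ∈ E → (x : OnePoint ℂ) ∉ U → δ ≤ dist z x := by
  obtain ⟨δ, hδ0, hδ⟩ := exists_pos_forall_lt_edist (isCompact_compl_preimage_coe hU hinfty)
    (hE.preimage OnePoint.continuous_coe) (disjoint_left.2 fun z hz hzE => hz (hEU hzE))
  refine ⟨δ, hδ0, fun z x hz hx => ?_⟩
  have := (hδ x hx z hz).le
  rw [edist_comm, edist_nndist, ENNReal.coe_le_coe] at this
  exact_mod_cast this

theorem exists_pos_nat_mul_le_mul_two_pow (a : ℝ) {δ : ℝ} (hδ : 0 < δ) :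
    ∃ k : ℕ, 0 < k ∧ k * a ≤ δ * 2 ^ k := by
  have hlim : Tendsto (fun k : ℕ => (k : ℝ) / 2 ^ k * a) atTop (𝓝 (0 * a)) := by
    simpa using (tendsto_pow_const_div_const_pow_of_one_lt 1
      (one_lt_two (α := ℝ))).mul_const a
  obtain ⟨k, hk, hk0⟩ := ((hlim.eventually (ge_mem_nhds (by simpa using hδ))).and
    (eventually_gt_atTop 0)).exists
  rw [div_mul_eq_mul_div, div_le_iff₀ (by positivity)] at hk
  exact ⟨k, hk0, hk⟩

theorem exists_polynomial_lemniscate {U : Set (OnePoint ℂ)} (hU : IsOpen U)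
    (hconn : IsPreconnected U) (hinfty : OnePoint.infty ∈ U) (hinf : Uᶜ.Infinite)
    {E : Set (OnePoint ℂ)} (hE : IsCompact E) (hEU : E ⊆ U) {B : ℝ} (hB : 0 < B) :
    ∃ Q : ℂ[X], 0 < Q.natDegree ∧ (∀ z : ℂ, (z : OnePoint ℂ) ∉ U → ‖Q.eval z‖ ≤ B⁻¹) ∧
      ∀ z : ℂ, (z : OnePoint ℂ) ∈ E → B ≤ ‖Q.eval z‖ := by
  have hK := isCompact_compl_preimage_coe hU hinfty
  obtain ⟨t, ht, htE⟩ := exists_finset_polynomial hU hconn hinfty hE hEU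
  obtain ⟨r, hr0, hr⟩ := hK.isBounded.exists_pos_norm_le
  obtain ⟨δ, hδ0, hδ⟩ := exists_pos_forall_le_dist hU hinfty hE.isClosed hEU
  set d : ℕ := t.sup natDegree + 1
  obtain ⟨k, hk0, hk⟩ := exists_pos_nat_mul_le_mul_two_pow (d * (B * (B * (2 * r)))) hδ0
  obtain ⟨F, hFdeg, hFK, hF⟩ := exists_polynomial_forall_mul_norm_eval_le hK
    (infinite_compl_preimage_coe hinfty hinf) hr (Nat.mul_pos hk0 (Nat.succ_pos (t.sup natDegree)))
  set s : ℝ := (B * (2 * r))⁻¹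
  have hs : 0 < s := by positivity
  have hnorm : ∀ z : ℂ, ‖(C (s : ℂ) * F).eval z‖ = s * ‖F.eval z‖ := fun z => by
    rw [eval_mul, eval_C, norm_mul, Complex.norm_real, Real.norm_of_nonneg hs.le]
  refine ⟨C (s : ℂ) * F, ?_, fun z hz => ?_, fun z hz => ?_⟩
  · rw [natDegree_C_mul (by exact_mod_cast hs.ne'), hFdeg]
    positivity
  · calc ‖(C (s : ℂ) * F).eval z‖ ≤ s * (2 * r) := by
          rw [hnorm]; exact mul_le_mul_of_nonneg_left (hFK z hz) hs.le
      _ = B⁻¹ := by simp only [s]; field_simp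
  · obtain ⟨Q, hQt, hQz⟩ := htE z hz
    have hdeg : (Q ^ k).natDegree < k * d := natDegree_pow_le.trans_lt
      (Nat.mul_lt_mul_of_pos_left (Nat.lt_succ_of_le (Finset.le_sup hQt)) hk0)
    have hQK : ∀ z : ℂ, (z : OnePoint ℂ) ∉ U → ‖(Q ^ k).eval z‖ ≤ 1 := fun z hz => by
      rw [eval_pow, norm_pow]
      exact pow_le_one₀ (norm_nonneg _) (ht Q hQt z hz)
    have hgrowth : δ * 2 ^ k ≤ (k * d : ℕ) * ‖F.eval z‖ := by
      refine le_trans ?_ (hF (Q ^ k) hdeg hQK δ z hδ0.le fun x hx => hδ z x hz hx)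
      rw [eval_pow, norm_pow]
      gcongr
    have hkd : (0 : ℝ) < k * d := by positivity
    have hle : (k * d : ℝ) * (B * (2 * r) * B) ≤ k * d * ‖F.eval z‖ := by
      push_cast at hgrowth
      linarith
    rw [hnorm, le_inv_mul_iff₀ (by positivity)]
    exact le_of_mul_le_mul_left hle hkd

/-! ### Basins of attraction -/

theorem tendsto_nhds_infty_iff_norm {α : Type*} {l : Filter α} {h : α → OnePoint ℂ} :
    Tendsto h l (𝓝 OnePoint.infty) ↔ ∀ r : ℝ, ∀ᶠ x in l, ∀ w : ℂ, h x = w → r < ‖w‖ := by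
  constructor
  · intro hl r
    have hmem : ((↑) '' closedBall (0 : ℂ) r : Set (OnePoint ℂ))ᶜ ∈ 𝓝 OnePoint.infty :=
      (OnePoint.isOpen_compl_image_coe.2 ⟨isClosed_closedBall,
        isCompact_closedBall _ _⟩).mem_nhds OnePoint.infty_notMem_image_coe
    filter_upwards [hl hmem] with x hx w hw
    by_contra! hwr
    exact hx ⟨w, mem_closedBall_zero_iff.2 hwr, hw.symm⟩
  · intro hr s hs
    obtain ⟨t, ⟨-, ht⟩, hts⟩ := OnePoint.hasBasis_nhds_infty.mem_iff.1 hs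
    obtain ⟨r, -, hrt⟩ := ht.isBounded.exists_pos_norm_le
    rw [Filter.mem_map]
    filter_upwards [hr r] with x hx
    refine hts ?_
    rcases eq_or_ne (h x) OnePoint.infty with h0 | h0
    · exact Or.inr h0
    · obtain ⟨w, hw⟩ := OnePoint.ne_infty_iff_exists.1 h0
      exact Or.inl ⟨w, fun hwt => (hx w hw.symm).not_ge (hrt w hwt), hw⟩

section Basin

variable {r : OnePoint ℂ → OnePoint ℂ} {w x : OnePoint ℂ}

theorem mem_basin_self (h : r w = w) : w ∈ basin r w :=
  tendsto_const_nhds.congr fun k => (Function.iterate_fixed h k).symm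

theorem apply_mem_basin_iff : r x ∈ basin r w ↔ x ∈ basin r w := by
  simp only [basin, mem_ofPred_eq, ← Function.iterate_succ_apply]
  exact tendsto_add_atTop_iff_nat (f := fun n => r^[n] x) 1

theorem iterate_mem_basin_iff (k : ℕ) : r^[k] x ∈ basin r w ↔ x ∈ basin r w := by
  induction k with
  | zero => rfl
  | succ k ih => rw [Function.iterate_succ_apply', apply_mem_basin_iff, ih]

theorem isOpen_basin (hr : Continuous r) {T : Set (OnePoint ℂ)} (hT : T ∈ 𝓝 w)
    (hsub : T ⊆ basin r w) : IsOpen (basin r w) := by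
  have hunion : basin r w = ⋃ k : ℕ, r^[k] ⁻¹' interior T := by
    refine Subset.antisymm (fun x hx => ?_) (iUnion_subset fun k x hx =>
      (iterate_mem_basin_iff k).1 (hsub (interior_subset hx)))
    obtain ⟨k, hk⟩ := (hx.eventually (interior_mem_nhds.2 hT)).exists
    exact mem_iUnion.2 ⟨k, hk⟩
  exact hunion ▸ isOpen_iUnion fun k => isOpen_interior.preimage (hr.iterate k)

theorem disjoint_basin (r : OnePoint ℂ → OnePoint ℂ) {w₁ w₂ : OnePoint ℂ} (h : w₁ ≠ w₂) :
    Disjoint (basin r w₁) (basin r w₂) :=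
  disjoint_left.2 fun _ h₁ h₂ => h (tendsto_nhds_unique h₁ h₂)

end Basin

/-- The distinct fixed points `p` and `w` of `r` have open basins, whose common frontier is the
complement of their union. -/
structure IsBasinPair (r : OnePoint ℂ → OnePoint ℂ) (p w : OnePoint ℂ) : Prop where
  map_left : r p = p
  map_right : r w = w
  ne : p ≠ w
  isOpen_left : IsOpen (basin r p)
  isOpen_right : IsOpen (basin r w)
  frontier_left : frontier (basin r p) = (basin r p ∪ basin r w)ᶜ
  frontier_right : frontier (basin r w) = (basin r p ∪ basin r w)ᶜ

theorem frontier_eq_compl_union {X : Type*} [TopologicalSpace X] {A B : Set X} (hA : IsOpen A)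
    (hB : IsOpen B) (hdisj : Disjoint A B) (hsub : (A ∪ B)ᶜ ⊆ closure A) :
    frontier A = (A ∪ B)ᶜ := by
  rw [hA.frontier_eq]
  refine Subset.antisymm ?_ fun x hx => ⟨hsub hx, fun hxA => hx (Or.inl hxA)⟩
  rintro x ⟨hx, hxA⟩ (h | h)
  · exact hxA h
  · exact disjoint_left.1 (hdisj.closure_left hB) hx h

theorem IsBasinPair.of_subset_closure {r : OnePoint ℂ → OnePoint ℂ} {p w : OnePoint ℂ}
    (hp : r p = p) (hw : r w = w) (hne : p ≠ w) (hop : IsOpen (basin r p))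
    (how : IsOpen (basin r w)) (hsubp : (basin r p ∪ basin r w)ᶜ ⊆ closure (basin r p))
    (hsubw : (basin r p ∪ basin r w)ᶜ ⊆ closure (basin r w)) : IsBasinPair r p w := by
  refine ⟨hp, hw, hne, hop, how, ?_, ?_⟩
  · exact frontier_eq_compl_union hop how (disjoint_basin r hne) hsubp
  · rw [union_comm] at hsubw ⊢
    exact frontier_eq_compl_union how hop (disjoint_basin r hne.symm) hsubw

/-! ### Expanding maps have a pair of basins with a common frontier -/

theorem hasDerivAt_iterate_prod {𝕜 : Type*} [NontriviallyNormedField 𝕜] {g : 𝕜 → 𝕜} {w : 𝕜}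
    {k : ℕ} (h : ∀ j < k, DifferentiableAt 𝕜 g (g^[j] w)) :
    HasDerivAt g^[k] (∏ j ∈ Finset.range k, deriv g (g^[j] w)) w := by
  induction k with
  | zero => simpa using hasDerivAt_id w
  | succ k ih =>
    rw [Function.iterate_succ', Finset.prod_range_succ, mul_comm]
    exact (h k k.lt_succ_self).hasDerivAt.comp w (ih fun j hj => h j (hj.trans k.lt_succ_self))

theorem norm_deriv_le_of_differentiableAt_off_countable {H : ℂ → ℂ} {z : ℂ} {t B : ℝ} {s : Set ℂ}
    (hs : s.Countable) (ht : 0 < t) (hc : ContinuousOn H (closedBall z t))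
    (hd : ∀ w ∈ ball z t \ s, DifferentiableAt ℂ H w) (hB : ∀ w ∈ closedBall z t, ‖H w‖ ≤ B) :
    ‖deriv H z‖ ≤ B / t := by
  lift t to NNReal using ht.le
  have hdiff : DifferentiableOn ℂ H (ball z t) := Metric.eball_coe (x := z) (ε := t) ▸
    (Complex.hasFPowerSeriesOnBall_of_differentiable_off_countable hs hc hd
      (by exact_mod_cast ht)).differentiableOn
  exact Complex.norm_deriv_le_of_forall_mem_sphere_norm_le ht
    ⟨hdiff, by rwa [closure_ball _ ht.ne']⟩ fun w hw => hB w (sphere_subset_closedBall hw)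

/-- A self-map of the sphere fixing infinity that is given by `g` off the set `S` of its finite
poles. -/
structure IsPolarExtension (f : OnePoint ℂ → OnePoint ℂ) (g : ℂ → ℂ) (S : Set ℂ) : Prop where
  continuous : Continuous f
  map_infty : f OnePoint.infty = OnePoint.infty
  map_pole : ∀ z ∈ S, f z = OnePoint.infty
  map_coe : ∀ z ∉ S, f z = (g z : OnePoint ℂ)
  differentiableAt : ∀ z ∉ S, DifferentiableAt ℂ g z
  countable_fiber : ∀ y, (f ⁻¹' {y}).Countable

namespace IsPolarExtension

variable {f : OnePoint ℂ → OnePoint ℂ} {g : ℂ → ℂ} {S : Set ℂ} {w : ℂ} {k : ℕ}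

theorem iterate_eq_and_notMem (h : IsPolarExtension f g S) (hk : f^[k] w ≠ OnePoint.infty) :
    f^[k] w = (g^[k] w : OnePoint ℂ) ∧ ∀ j < k, g^[j] w ∉ S := by
  induction k with
  | zero => simp
  | succ k ih =>
    rw [Function.iterate_succ_apply'] at hk
    obtain ⟨heq, hmem⟩ := ih fun h0 => hk (by rw [h0, h.map_infty])
    have hkS : g^[k] w ∉ S := fun hS => hk (by rw [heq, h.map_pole _ hS])
    refine ⟨by rw [Function.iterate_succ_apply', heq, h.map_coe _ hkS,
      Function.iterate_succ_apply'], fun j hj => ?_⟩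
    rcases Nat.lt_succ_iff_lt_or_eq.1 hj with hj | rfl
    · exact hmem j hj
    · exact hkS

theorem iterate_eq (h : IsPolarExtension f g S) (hk : f^[k] w ≠ OnePoint.infty) :
    f^[k] w = (g^[k] w : OnePoint ℂ) :=
  (h.iterate_eq_and_notMem hk).1

theorem hasDerivAt_iterate (h : IsPolarExtension f g S) (hk : f^[k] w ≠ OnePoint.infty) :
    HasDerivAt g^[k] (∏ j ∈ Finset.range k, deriv g (g^[j] w)) w :=
  hasDerivAt_iterate_prod fun j hj => h.differentiableAt _ ((h.iterate_eq_and_notMem hk).2 j hj)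

theorem continuous_iterate_coe (h : IsPolarExtension f g S) (k : ℕ) :
    Continuous fun w : ℂ => f^[k] w :=
  (h.continuous.iterate k).comp OnePoint.continuous_coe

theorem countable_iterate_eq_infty (h : IsPolarExtension f g S) (k : ℕ) :
    {w : ℂ | f^[k] w = OnePoint.infty}.Countable := by
  suffices hs : (f^[k] ⁻¹' {OnePoint.infty}).Countable from
    hs.preimage OnePoint.coe_injective
  induction k with
  | zero => simp
  | succ k ih =>
    rw [Function.iterate_succ, preimage_comp, ← biUnion_preimage_singleton]
    exact ih.biUnion fun y _ => h.countable_fiber y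

end IsPolarExtension

/-- The coordinate `1 / (x - b)` on the sphere, vanishing at infinity and, by the convention for
the inverse of zero, at its pole `b`. -/
def recipCoord (b : ℂ) (x : OnePoint ℂ) : ℂ := x.elim 0 fun v => (v - b)⁻¹

theorem continuousAt_recipCoord {b : ℂ} {x : OnePoint ℂ} (hx : x ≠ b) :
    ContinuousAt (recipCoord b) x := by
  induction x using OnePoint.rec with
  | infty =>
    rw [OnePoint.continuousAt_infty', coclosedCompact_eq_cocompact, ← Metric.cobounded_eq_cocompact]
    exact tendsto_inv₀_cobounded.comp (tendsto_sub_const_cobounded b)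
  | coe z =>
    rw [OnePoint.continuousAt_coe]
    have hz : z - b ≠ 0 := sub_ne_zero.2 fun h => hx (by rw [h])
    exact (continuousAt_id.sub continuousAt_const).inv₀ hz

theorem not_forall_two_pow_le {a : ℝ} : ¬∀ k : ℕ, (2 : ℝ) ^ k ≤ a := fun h => by
  obtain ⟨k, hk⟩ := pow_unbounded_of_one_lt a one_lt_two
  exact (h k).not_gt hk

theorem exists_closedBall_of_notMem_closure {A : Set (OnePoint ℂ)} {z : ℂ}
    (hz : (z : OnePoint ℂ) ∉ closure A) :
    ∃ t : ℝ, 0 < t ∧ ∀ w ∈ closedBall z t, (w : OnePoint ℂ) ∉ A := by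
  obtain ⟨t, ht, hball⟩ := Metric.nhds_basis_closedBall.mem_iff.1
    ((isClosed_closure.isOpen_compl.preimage OnePoint.continuous_coe).mem_nhds hz)
  exact ⟨t, ht, fun w hw hwA => hball hw (subset_closure hwA)⟩

/-- A polar extension with trapping regions around infinity and around the finite fixed point `b`
that expands at every point mapped outside both trapping regions. -/
structure IsExpandingPolarExtension (f : OnePoint ℂ → OnePoint ℂ) (g : ℂ → ℂ) (S : Set ℂ) (b : ℂ)
    (M ρ : ℝ) : Prop extends IsPolarExtension f g S where
  M_pos : 0 < M
  ρ_pos : 0 < ρ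
  far : ∀ z : ℂ, M ≤ ‖z‖ → z ∉ S ∧ 2 * ‖z‖ ≤ ‖g z‖
  near : ∀ z : ℂ, ‖z - b‖ < ρ → z ∉ S ∧ ‖g z - b‖ ≤ 2⁻¹ * ‖z - b‖
  expand : ∀ z ∉ S, ρ ≤ ‖g z - b‖ → ‖g z‖ ≤ M → 2 ≤ ‖deriv g z‖

namespace IsExpandingPolarExtension

variable {f : OnePoint ℂ → OnePoint ℂ} {g : ℂ → ℂ} {S : Set ℂ} {b : ℂ} {M ρ : ℝ} {z : ℂ} {k : ℕ}

theorem exists_iterate_eq_of_le_norm (h : IsExpandingPolarExtension f g S b M ρ) (hz : M ≤ ‖z‖)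
    (k : ℕ) : ∃ w : ℂ, f^[k] z = w ∧ 2 ^ k * M ≤ ‖w‖ := by
  induction k with
  | zero => exact ⟨z, rfl, by simpa using hz⟩
  | succ k ih =>
    obtain ⟨w, hw, hwM⟩ := ih
    have hM : M ≤ ‖w‖ := (le_mul_of_one_le_left h.M_pos.le (one_le_pow₀ one_le_two)).trans hwM
    obtain ⟨hwS, hg⟩ := h.far w hM
    refine ⟨g w, by rw [Function.iterate_succ_apply', hw, h.map_coe w hwS], ?_⟩
    rw [pow_succ]
    linarith

theorem mem_basin_infty_of_le_norm (h : IsExpandingPolarExtension f g S b M ρ) (hz : M ≤ ‖z‖) :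
    (z : OnePoint ℂ) ∈ basin f OnePoint.infty := by
  refine tendsto_nhds_infty_iff_norm.2 fun r => ?_
  have hlim : Tendsto (fun k : ℕ => (2 : ℝ) ^ k * M) atTop atTop :=
    (tendsto_pow_atTop_atTop_of_one_lt one_lt_two).atTop_mul_const h.M_pos
  filter_upwards [hlim.eventually_gt_atTop r] with k hk w hw
  obtain ⟨w', hw', hle⟩ := h.exists_iterate_eq_of_le_norm hz k
  rw [hw', OnePoint.coe_eq_coe] at hw
  exact hk.trans_le (hw ▸ hle)

theorem iterate_eq_of_norm_sub_lt (h : IsExpandingPolarExtension f g S b M ρ)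
    (hz : ‖z - b‖ < ρ) (k : ℕ) :
    f^[k] z = (g^[k] z : OnePoint ℂ) ∧ ‖g^[k] z - b‖ ≤ 2⁻¹ ^ k * ‖z - b‖ := by
  induction k with
  | zero => simp
  | succ k ih =>
    obtain ⟨hw, hle⟩ := ih
    have hlt : ‖g^[k] z - b‖ < ρ := (hle.trans (mul_le_of_le_one_left (norm_nonneg _)
      (pow_le_one₀ (by norm_num) (by norm_num)))).trans_lt hz
    obtain ⟨hS, hg⟩ := h.near _ hlt
    refine ⟨by rw [Function.iterate_succ_apply', hw, h.map_coe _ hS,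
      Function.iterate_succ_apply'], ?_⟩
    rw [pow_succ', Function.iterate_succ_apply']
    linarith

theorem mem_basin_of_norm_sub_lt (h : IsExpandingPolarExtension f g S b M ρ)
    (hz : ‖z - b‖ < ρ) : (z : OnePoint ℂ) ∈ basin f b := by
  have hlim : Tendsto (fun k : ℕ => (2⁻¹ : ℝ) ^ k * ‖z - b‖) atTop (𝓝 0) := by
    simpa using (tendsto_pow_atTop_nhds_zero_of_lt_one (r := (2⁻¹ : ℝ)) (by norm_num)
      (by norm_num)).mul_const ‖z - b‖
  have hg : Tendsto (fun k => g^[k] z) atTop (𝓝 b) := tendsto_iff_norm_sub_tendsto_zero.2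
    (squeeze_zero (fun _ => norm_nonneg _) (fun k => (h.iterate_eq_of_norm_sub_lt hz k).2) hlim)
  exact ((OnePoint.continuous_coe.tendsto b).comp hg).congr fun k =>
    (h.iterate_eq_of_norm_sub_lt hz k).1.symm

theorem map_right (h : IsExpandingPolarExtension f g S b M ρ) : f b = b := by
  have hlt : ‖b - b‖ < ρ := by simpa using h.ρ_pos
  obtain ⟨hbS, hb⟩ := h.near b hlt
  rw [sub_self, norm_zero, mul_zero, norm_le_zero_iff, sub_eq_zero] at hb
  rw [h.map_coe b hbS, hb]

theorem isOpen_basin_infty (h : IsExpandingPolarExtension f g S b M ρ) :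
    IsOpen (basin f OnePoint.infty) := by
  refine isOpen_basin h.continuous (T := ((↑) '' closedBall (0 : ℂ) M)ᶜ)
    ((OnePoint.isOpen_compl_image_coe.2 ⟨isClosed_closedBall,
      isCompact_closedBall _ _⟩).mem_nhds OnePoint.infty_notMem_image_coe) fun x hx => ?_
  induction x using OnePoint.rec with
  | infty => exact mem_basin_self h.map_infty
  | coe z =>
    refine h.mem_basin_infty_of_le_norm ?_
    by_contra! hz
    exact hx (mem_image_of_mem _ (mem_closedBall_zero_iff.2 hz.le))

theorem isOpen_basin_coe (h : IsExpandingPolarExtension f g S b M ρ) : IsOpen (basin f b) := by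
  refine isOpen_basin h.continuous (T := (↑) '' ball b ρ)
    ((OnePoint.isOpen_image_coe.2 isOpen_ball).mem_nhds ⟨b, mem_ball_self h.ρ_pos, rfl⟩) ?_
  exact image_subset_iff.2 fun z hz => h.mem_basin_of_norm_sub_lt (mem_ball_iff_norm.1 hz)

theorem iterate_ne_infty (h : IsExpandingPolarExtension f g S b M ρ)
    (hz : (z : OnePoint ℂ) ∉ basin f OnePoint.infty) (k : ℕ) : f^[k] z ≠ OnePoint.infty :=
  fun hk => hz ((iterate_mem_basin_iff k).1 (by rw [hk]; exact mem_basin_self h.map_infty))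

theorem norm_iterate_le (h : IsExpandingPolarExtension f g S b M ρ)
    (hz : (z : OnePoint ℂ) ∉ basin f OnePoint.infty) (k : ℕ) : ‖g^[k] z‖ ≤ M := by
  by_contra! hk
  have hmem := h.mem_basin_infty_of_le_norm hk.le
  rw [← h.iterate_eq (h.iterate_ne_infty hz k)] at hmem
  exact hz ((iterate_mem_basin_iff k).1 hmem)

theorem le_norm_iterate_sub (h : IsExpandingPolarExtension f g S b M ρ)
    (hz : (z : OnePoint ℂ) ∉ basin f b) (hk : f^[k] z ≠ OnePoint.infty) :
    ρ ≤ ‖g^[k] z - b‖ := by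
  by_contra! hlt
  have hmem := h.mem_basin_of_norm_sub_lt hlt
  rw [← h.iterate_eq hk] at hmem
  exact hz ((iterate_mem_basin_iff k).1 hmem)

theorem two_pow_le_norm_deriv_iterate (h : IsExpandingPolarExtension f g S b M ρ)
    (hz : (z : OnePoint ℂ) ∉ basin f OnePoint.infty) (hz' : (z : OnePoint ℂ) ∉ basin f b)
    (k : ℕ) : 2 ^ k ≤ ‖deriv g^[k] z‖ := by
  rw [(h.hasDerivAt_iterate (h.iterate_ne_infty hz k)).deriv, norm_prod]
  have hconst : (2 : ℝ) ^ k = ∏ _j ∈ Finset.range k, 2 := by simp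
  refine hconst.trans_le (Finset.prod_le_prod (fun _ _ => zero_le_two) fun j _ => ?_)
  have hne := h.iterate_ne_infty hz (j + 1)
  have hM := h.norm_iterate_le hz (j + 1)
  have hρ := h.le_norm_iterate_sub hz' hne
  rw [Function.iterate_succ_apply'] at hM hρ
  exact h.expand _ ((h.iterate_eq_and_notMem hne).2 j j.lt_succ_self) hρ hM

/-- Near a point off the closure of the basin the iterates of `g` are bounded by `M`, so by
Cauchy's estimate their derivatives cannot grow exponentially. -/
theorem mem_closure_basin_infty (h : IsExpandingPolarExtension f g S b M ρ)
    (hz : (z : OnePoint ℂ) ∉ basin f OnePoint.infty) (hz' : (z : OnePoint ℂ) ∉ basin f b) :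
    (z : OnePoint ℂ) ∈ closure (basin f OnePoint.infty) := by
  by_contra hcl
  obtain ⟨t, ht, hout⟩ := exists_closedBall_of_notMem_closure hcl
  refine not_forall_two_pow_le (a := M / t) fun k =>
    (h.two_pow_le_norm_deriv_iterate hz hz' k).trans ?_
  have hd : ∀ w ∈ closedBall z t, DifferentiableAt ℂ g^[k] w := fun w hw =>
    (h.hasDerivAt_iterate (h.iterate_ne_infty (hout w hw) k)).differentiableAt
  exact norm_deriv_le_of_differentiableAt_off_countable countable_empty ht
    (fun w hw => (hd w hw).continuousAt.continuousWithinAt)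
    (fun w hw => hd w (ball_subset_closedBall hw.1)) fun w hw => h.norm_iterate_le (hout w hw) k

theorem norm_recipCoord_iterate_le (h : IsExpandingPolarExtension f g S b M ρ)
    (hz : (z : OnePoint ℂ) ∉ basin f b) (k : ℕ) : ‖recipCoord b (f^[k] z)‖ ≤ ρ⁻¹ := by
  by_cases hk : f^[k] z = OnePoint.infty
  · rw [hk, recipCoord, OnePoint.elim_infty, norm_zero]
    exact inv_nonneg.2 h.ρ_pos.le
  · rw [h.iterate_eq hk, recipCoord, OnePoint.elim_some, norm_inv]
    exact inv_anti₀ h.ρ_pos (h.le_norm_iterate_sub hz hk)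

theorem iterate_ne_coe (h : IsExpandingPolarExtension f g S b M ρ)
    (hz : (z : OnePoint ℂ) ∉ basin f b) (k : ℕ) : f^[k] z ≠ b :=
  fun hk => hz ((iterate_mem_basin_iff k).1 (by rw [hk]; exact mem_basin_self h.map_right))

theorem hasDerivAt_recipCoord_iterate (h : IsExpandingPolarExtension f g S b M ρ)
    (hz : (z : OnePoint ℂ) ∉ basin f b) (hk : f^[k] z ≠ OnePoint.infty) :
    HasDerivAt (fun w : ℂ => recipCoord b (f^[k] w)) (-deriv g^[k] z / (g^[k] z - b) ^ 2) z := by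
  have hgb : g^[k] z - b ≠ 0 :=
    norm_pos_iff.1 (h.ρ_pos.trans_le (h.le_norm_iterate_sub hz hk))
  have hev : ∀ᶠ w : ℂ in 𝓝 z, f^[k] w ≠ OnePoint.infty :=
    (h.continuous_iterate_coe k).continuousAt.eventually_ne hk
  refine ((((h.hasDerivAt_iterate hk).differentiableAt.hasDerivAt).sub_const b).inv
    hgb).congr_of_eventuallyEq ?_
  filter_upwards [hev] with w hw
  rw [h.iterate_eq hw]
  rfl

/-- The argument of `mem_closure_basin_infty`, applied in the coordinate `1 / (x - b)` in which
the complement of the basin of `b` is bounded. -/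
theorem mem_closure_basin_coe (h : IsExpandingPolarExtension f g S b M ρ)
    (hz : (z : OnePoint ℂ) ∉ basin f OnePoint.infty) (hz' : (z : OnePoint ℂ) ∉ basin f b) :
    (z : OnePoint ℂ) ∈ closure (basin f b) := by
  by_contra hcl
  obtain ⟨t, ht, hout⟩ := exists_closedBall_of_notMem_closure hcl
  refine not_forall_two_pow_le (a := ρ⁻¹ / t * (M + ‖b‖) ^ 2) fun k =>
    (h.two_pow_le_norm_deriv_iterate hz hz' k).trans ?_
  have hk := h.iterate_ne_infty hz k
  have hcauchy := norm_deriv_le_of_differentiableAt_off_countable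
    (H := fun w : ℂ => recipCoord b (f^[k] w)) (h.countable_iterate_eq_infty k) ht
    (fun w hw => (ContinuousAt.comp' (f := fun w : ℂ => f^[k] w)
      (continuousAt_recipCoord (h.iterate_ne_coe (hout w hw) k))
      (h.continuous_iterate_coe k).continuousAt).continuousWithinAt)
    (fun w hw => (h.hasDerivAt_recipCoord_iterate (hout w (ball_subset_closedBall hw.1))
      hw.2).differentiableAt)
    fun w hw => h.norm_recipCoord_iterate_le (hout w hw) k
  have hpos : 0 < ‖g^[k] z - b‖ := h.ρ_pos.trans_le (h.le_norm_iterate_sub hz' hk)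
  rw [(h.hasDerivAt_recipCoord_iterate hz' hk).deriv, norm_div, norm_neg, norm_pow,
    div_le_iff₀ (pow_pos hpos 2)] at hcauchy
  refine hcauchy.trans ?_
  have hρt : 0 ≤ ρ⁻¹ / t := div_nonneg (inv_nonneg.2 h.ρ_pos.le) ht.le
  gcongr
  exact (norm_sub_le _ _).trans (add_le_add_left (h.norm_iterate_le hz k) _)

theorem isBasinPair (h : IsExpandingPolarExtension f g S b M ρ) :
    IsBasinPair f OnePoint.infty b := by
  have hcl : ∀ x ∈ (basin f OnePoint.infty ∪ basin f b)ᶜ,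
      x ∈ closure (basin f OnePoint.infty) ∧ x ∈ closure (basin f b) := by
    intro x hx
    rw [mem_compl_iff, mem_union, not_or] at hx
    induction x using OnePoint.rec with
    | infty => exact absurd (mem_basin_self h.map_infty) hx.1
    | coe z => exact ⟨h.mem_closure_basin_infty hx.1 hx.2, h.mem_closure_basin_coe hx.1 hx.2⟩
  exact .of_subset_closure h.map_infty h.map_right (OnePoint.infty_ne_coe b) h.isOpen_basin_infty
    h.isOpen_basin_coe (fun x hx => (hcl x hx).1) fun x hx => (hcl x hx).2

end IsExpandingPolarExtension

/-! ### Powers of a rational function with a pole at infinity -/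

/-- The value at `z` of the fraction `N / D` in the sphere: infinity where `D` vanishes. -/
def ratVal (N D : ℂ[X]) (z : ℂ) : OnePoint ℂ :=
  open Classical in
  if D.eval z = 0 then OnePoint.infty else ((N.eval z / D.eval z : ℂ) : OnePoint ℂ)

/-- The self-map of the sphere that fixes infinity and equals `N / D` elsewhere. -/
def ratMap (N D : ℂ[X]) (x : OnePoint ℂ) : OnePoint ℂ := x.elim OnePoint.infty (ratVal N D)

section ratVal

variable {N D : ℂ[X]} {z w : ℂ}

theorem ratVal_of_eval_eq_zero (h : D.eval z = 0) : ratVal N D z = OnePoint.infty := if_pos h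

theorem ratVal_of_eval_ne_zero (h : D.eval z ≠ 0) :
    ratVal N D z = ((N.eval z / D.eval z : ℂ) : OnePoint ℂ) :=
  if_neg h

theorem ratVal_eq_infty : ratVal N D z = OnePoint.infty ↔ D.eval z = 0 := by
  refine ⟨fun h => ?_, ratVal_of_eval_eq_zero⟩
  by_contra h0
  exact OnePoint.coe_ne_infty _ ((ratVal_of_eval_ne_zero h0).symm.trans h)

theorem ratVal_eq_coe : ratVal N D z = w ↔ D.eval z ≠ 0 ∧ N.eval z / D.eval z = w := by
  by_cases h : D.eval z = 0
  · simp [ratVal_of_eval_eq_zero h, h]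
  · simp [ratVal_of_eval_ne_zero h, h]

theorem tendsto_ratVal_infty {l : Filter ℂ} (h : ∀ r : ℝ, ∀ᶠ z in l, r * ‖D.eval z‖ < ‖N.eval z‖) :
    Tendsto (ratVal N D) l (𝓝 OnePoint.infty) := by
  refine tendsto_nhds_infty_iff_norm.2 fun r => ?_
  filter_upwards [h r] with z hz w hw
  obtain ⟨hD, rfl⟩ := ratVal_eq_coe.1 hw
  rwa [norm_div, lt_div_iff₀ (norm_pos_iff.2 hD)]

theorem eval_ne_zero_of_isCoprime (h : IsCoprime N D) (hz : D.eval z = 0) : N.eval z ≠ 0 := by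
  intro hN
  obtain ⟨u, v, huv⟩ := h
  simpa [hz, hN] using congrArg (eval z) huv

theorem continuous_ratVal (h : IsCoprime N D) : Continuous (ratVal N D) := by
  refine continuous_iff_continuousAt.2 fun z => ?_
  by_cases hz : D.eval z = 0
  · rw [ContinuousAt, ratVal_of_eval_eq_zero hz]
    refine tendsto_ratVal_infty fun r => ?_
    have hr : ContinuousAt (fun x : ℂ => r * ‖D.eval x‖) z := by fun_prop
    refine hr.eventually_lt (by fun_prop) ?_
    simpa [hz] using eval_ne_zero_of_isCoprime h hz
  · have hc : ContinuousAt (fun x => N.eval x / D.eval x) z :=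
      ContinuousAt.div (by fun_prop) (by fun_prop) hz
    refine (OnePoint.continuous_coe.continuousAt.comp hc).congr ?_
    filter_upwards [D.continuous.continuousAt.eventually_ne hz] with x hx
    exact (ratVal_of_eval_ne_zero hx).symm

theorem hasDerivAt_eval_div (N D : ℂ[X]) (hz : D.eval z ≠ 0) :
    HasDerivAt (fun x => N.eval x / D.eval x)
      ((derivative N * D - N * derivative D).eval z / D.eval z ^ 2) z := by
  rw [eval_sub, eval_mul, eval_mul]
  exact (N.hasDerivAt z).div (D.hasDerivAt z) hz

theorem eventually_cofinite_eval_ne_zero (hD : D ≠ 0) :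
    ∀ᶠ z in cofinite, D.eval z ≠ 0 := by
  simpa [Filter.Eventually, mem_cofinite, compl_ofPred] using finite_setOfPred_isRoot hD

theorem eventually_cobounded_eval_ne_zero (hD : D ≠ 0) :
    ∀ᶠ z in Bornology.cobounded ℂ, D.eval z ≠ 0 :=
  (eventually_cofinite_eval_ne_zero hD).filter_mono (Bornology.le_cofinite ℂ)

end ratVal

/-- A fraction `N / D` in lowest terms with a pole at infinity. -/
structure IsPolarFraction (N D : ℂ[X]) : Prop where
  isCoprime : IsCoprime N D
  natDegree_lt : D.natDegree < N.natDegree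

namespace IsPolarFraction

variable {N D : ℂ[X]}

theorem den_ne_zero (h : IsPolarFraction N D) : D ≠ 0 := by
  rintro rfl
  exact h.natDegree_lt.ne' (natDegree_eq_zero_of_isUnit (isCoprime_zero_right.1 h.isCoprime))

theorem eventually_mul_norm_lt (h : IsPolarFraction N D) (r : ℝ) :
    ∀ᶠ z in Bornology.cobounded ℂ, r * ‖D.eval z‖ < ‖N.eval z‖ := by
  have ho := isLittleO_cobounded_of_degree_lt (degree_lt_degree h.natDegree_lt)
  filter_upwards [ho.def (show 0 < (|r| + 1)⁻¹ by positivity),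
    eventually_cobounded_eval_ne_zero h.den_ne_zero] with z hz hD
  rw [inv_mul_eq_div, le_div_iff₀ (by positivity)] at hz
  nlinarith [norm_pos_iff.2 hD, le_abs_self r]

theorem exists_norm_le_mul_norm (h : IsPolarFraction N D) :
    ∃ c : ℝ, ∀ᶠ z in Bornology.cobounded ℂ, ‖z‖ ≤ c * ‖N.eval z / D.eval z‖ := by
  have hdeg : (X * D).degree ≤ N.degree := by
    have hN : N ≠ 0 := ne_zero_of_natDegree_gt h.natDegree_lt
    rw [degree_eq_natDegree (mul_ne_zero X_ne_zero h.den_ne_zero), degree_eq_natDegree hN,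
      natDegree_X_mul h.den_ne_zero]
    exact_mod_cast h.natDegree_lt
  obtain ⟨c, hc⟩ := (isBigO_cobounded_of_degree_le hdeg).bound
  refine ⟨c, ?_⟩
  filter_upwards [hc, eventually_cobounded_eval_ne_zero h.den_ne_zero] with z hz hD
  rw [eval_mul, eval_X, norm_mul] at hz
  rwa [norm_div, ← mul_div_assoc, le_div_iff₀ (norm_pos_iff.2 hD)]

theorem continuous_ratMap (h : IsPolarFraction N D) : Continuous (ratMap N D) := by
  refine (OnePoint.continuous_iff _).2 ⟨?_, continuous_ratVal h.isCoprime⟩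
  rw [coclosedCompact_eq_cocompact, ← Metric.cobounded_eq_cocompact]
  exact tendsto_ratVal_infty h.eventually_mul_norm_lt

theorem isRationalMap_ratMap (h : IsPolarFraction N D) : IsRationalMap (ratMap N D) :=
  ⟨h.continuous_ratMap, N, D, h.isCoprime, fun h0 => (Nat.zero_le _).not_gt (h0.1 ▸ h.natDegree_lt),
    fun _ hz => ratVal_of_eval_ne_zero hz⟩

theorem finite_ratVal_eq (h : IsPolarFraction N D) (y : OnePoint ℂ) :
    {z | ratVal N D z = y}.Finite := by
  induction y using OnePoint.rec with
  | infty =>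
    simp only [ratVal_eq_infty]
    exact finite_setOfPred_isRoot h.den_ne_zero
  | coe w =>
    have hne : N - C w * D ≠ 0 := fun h0 => h.natDegree_lt.not_ge <| by
      rw [sub_eq_zero.1 h0]
      exact natDegree_C_mul_le w D
    refine (finite_setOfPred_isRoot hne).subset fun z hz => ?_
    obtain ⟨hD, hw⟩ := ratVal_eq_coe.1 hz
    simp only [mem_ofPred_eq, IsRoot, eval_sub, eval_mul, eval_C]
    rw [← hw, div_mul_cancel₀ _ hD, sub_self]

theorem countable_ratMap_fiber (h : IsPolarFraction N D) (y : OnePoint ℂ) :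
    (ratMap N D ⁻¹' {y}).Countable := by
  refine (((h.finite_ratVal_eq y).countable.image (↑)).insert OnePoint.infty).mono fun x hx => ?_
  induction x using OnePoint.rec with
  | infty => exact mem_insert _ _
  | coe z => exact mem_insert_of_mem _ ⟨z, hx, rfl⟩

theorem pow_add_C_mul (h : IsPolarFraction N D) (b : ℂ) {n : ℕ} (hn : n ≠ 0) :
    IsPolarFraction (N ^ n + C b * D ^ n) (D ^ n) where
  isCoprime := by
    rw [mul_comm]
    exact (h.isCoprime.pow (m := n) (n := n)).add_mul_left_left (C b)
  natDegree_lt := by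
    have hlt : (D ^ n).natDegree < (N ^ n).natDegree := by
      rw [natDegree_pow, natDegree_pow]
      exact Nat.mul_lt_mul_of_pos_left h.natDegree_lt hn.bot_lt
    rwa [natDegree_add_eq_left_of_natDegree_lt ((natDegree_C_mul_le b _).trans_lt hlt)]

theorem isPolarExtension_pow (h : IsPolarFraction N D) (b : ℂ) {n : ℕ} (hn : n ≠ 0) :
    IsPolarExtension (ratMap (N ^ n + C b * D ^ n) (D ^ n))
      (fun z => b + (N.eval z / D.eval z) ^ n) {z | D.eval z = 0} where
  continuous := (h.pow_add_C_mul b hn).continuous_ratMap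
  map_infty := rfl
  map_pole z hz := ratVal_of_eval_eq_zero (by rw [eval_pow, hz.out, zero_pow hn])
  map_coe z (hz : D.eval z ≠ 0) := by
    refine (ratVal_of_eval_ne_zero (by rw [eval_pow]; exact pow_ne_zero n hz)).trans
      (congrArg _ ?_)
    simp only [eval_add, eval_pow, eval_mul, eval_C, div_pow]
    rw [add_div, mul_div_cancel_right₀ _ (pow_ne_zero n hz), add_comm]
  differentiableAt z hz := (((hasDerivAt_eval_div N D hz).fun_pow n).const_add b).differentiableAt
  countable_fiber := (h.pow_add_C_mul b hn).countable_ratMap_fiber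

theorem isCompact_norm_le (h : IsPolarFraction N D) :
    IsCompact {z | ‖D.eval z‖ ≤ 2 * ‖N.eval z‖ ∧ ‖N.eval z‖ ≤ 2 * ‖D.eval z‖} := by
  refine Metric.isCompact_of_isClosed_isBounded ?_ (Bornology.isBounded_def.2 ?_)
  · exact (isClosed_le D.continuous.norm (continuous_const.mul N.continuous.norm)).inter
      (isClosed_le N.continuous.norm (continuous_const.mul D.continuous.norm))
  · filter_upwards [h.eventually_mul_norm_lt 2] with z hz hz'
    exact hz'.2.not_gt hz

theorem exists_pos_le_norm_deriv (h : IsPolarFraction N D)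
    (hcrit : ∀ z, ‖N.eval z‖ = ‖D.eval z‖ → (derivative N * D - N * derivative D).eval z ≠ 0) :
    ∃ δ : ℝ, 0 < δ ∧ δ ≤ 1 / 2 ∧ ∀ z, D.eval z ≠ 0 → |‖N.eval z / D.eval z‖ - 1| < δ →
      δ ≤ ‖deriv (fun x => N.eval x / D.eval x) z‖ := by
  set K := {z | ‖D.eval z‖ ≤ 2 * ‖N.eval z‖ ∧ ‖N.eval z‖ ≤ 2 * ‖D.eval z‖}
  have hKD : ∀ z ∈ K, D.eval z ≠ 0 := fun z hz h0 =>
    eval_ne_zero_of_isCoprime h.isCoprime h0 (norm_le_zero_iff.1 (by simpa [h0] using hz.2))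
  have hcont : ContinuousOn (fun z => max |‖N.eval z / D.eval z‖ - 1|
      ‖(derivative N * D - N * derivative D).eval z / D.eval z ^ 2‖) K := by
    have hsq : ∀ z ∈ K, D.eval z ^ 2 ≠ 0 := fun z hz => pow_ne_zero 2 (hKD z hz)
    fun_prop (disch := assumption)
  have hpos : ∀ z ∈ K, 0 < max |‖N.eval z / D.eval z‖ - 1|
      ‖(derivative N * D - N * derivative D).eval z / D.eval z ^ 2‖ := by
    intro z hz
    rcases eq_or_ne ‖N.eval z / D.eval z‖ 1 with h1 | h1
    · rw [norm_div, div_eq_one_iff_eq (norm_ne_zero_iff.2 (hKD z hz))] at h1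
      exact lt_max_of_lt_right (norm_pos_iff.2 (div_ne_zero (hcrit z h1)
        (pow_ne_zero 2 (hKD z hz))))
    · exact lt_max_of_lt_left (abs_pos.2 (sub_ne_zero.2 h1))
  obtain ⟨a, ha, hK⟩ := h.isCompact_norm_le.exists_forall_le' hcont hpos
  refine ⟨min a (1 / 2), lt_min ha one_half_pos, min_le_right _ _, fun z hz hlt => ?_⟩
  have hzK : z ∈ K := by
    obtain ⟨h1, h2⟩ := abs_lt.1 (hlt.trans_le (min_le_right _ _))
    rw [norm_div] at h1 h2
    have h3 := (div_lt_iff₀ (norm_pos_iff.2 hz)).1 (sub_lt_iff_lt_add.1 h2)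
    have h4 := (lt_div_iff₀ (norm_pos_iff.2 hz)).1 (lt_sub_iff_add_lt.1 h1)
    constructor <;> linarith
  rw [(hasDerivAt_eval_div N D hz).deriv]
  refine (min_le_left _ _).trans ((le_max_iff.1 (hK z hzK)).resolve_left ?_)
  exact (hlt.trans_le (min_le_left _ _)).not_ge

theorem exists_far (h : IsPolarFraction N D) (a : ℝ) :
    ∃ M : ℝ, 1 ≤ M ∧ ∀ z, M ≤ ‖z‖ → D.eval z ≠ 0 ∧ 1 ≤ ‖N.eval z / D.eval z‖ ∧
      a * ‖z‖ ≤ ‖N.eval z / D.eval z‖ ^ 2 := by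
  obtain ⟨c, hc⟩ := h.exists_norm_le_mul_norm
  have hev : ∀ᶠ z in Bornology.cobounded ℂ, D.eval z ≠ 0 ∧ 1 ≤ ‖N.eval z / D.eval z‖ ∧
      a * ‖z‖ ≤ ‖N.eval z / D.eval z‖ ^ 2 := by
    filter_upwards [hc, eventually_cobounded_eval_ne_zero h.den_ne_zero,
      h.eventually_mul_norm_lt 1, h.eventually_mul_norm_lt (|a| * c)] with z hz hD h1 h2
    have hlarge : ∀ r : ℝ, r * ‖D.eval z‖ < ‖N.eval z‖ → r ≤ ‖N.eval z / D.eval z‖ := by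
      intro r hr
      rw [norm_div, le_div_iff₀ (norm_pos_iff.2 hD)]
      exact hr.le
    refine ⟨hD, hlarge 1 h1, ?_⟩
    calc a * ‖z‖ ≤ |a| * (c * ‖N.eval z / D.eval z‖) := by gcongr; exact le_abs_self a
      _ = |a| * c * ‖N.eval z / D.eval z‖ := (mul_assoc _ _ _).symm
      _ ≤ ‖N.eval z / D.eval z‖ ^ 2 := by rw [sq]; gcongr; exact hlarge _ h2
  obtain ⟨M, -, hM⟩ := hasBasis_cobounded_norm.eventually_iff.1 hev
  exact ⟨max M 1, le_max_right _ _, fun z hz => hM ((le_max_left _ _).trans hz)⟩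

end IsPolarFraction

theorem exists_near {N D : ℂ[X]} {b : ℂ} (hD : D.eval b ≠ 0) (hN : N.eval b = 0) :
    ∃ ρ : ℝ, 0 < ρ ∧ ∀ z, ‖z - b‖ < ρ → D.eval z ≠ 0 ∧ ‖N.eval z / D.eval z‖ ≤ 1 ∧
      ‖N.eval z / D.eval z‖ ^ 2 ≤ 2⁻¹ * ‖z - b‖ := by
  have hd := hasDerivAt_eval_div N D hD
  have hsq : HasDerivAt (fun z => (N.eval z / D.eval z) ^ 2) 0 b := by
    simpa [hN] using hd.fun_pow 2
  have hone : ∀ᶠ z in 𝓝 b, ‖N.eval z / D.eval z‖ ≤ 1 :=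
    (hd.continuousAt.norm.eventually_lt continuousAt_const (by simp [hN])).mono fun _ => le_of_lt
  obtain ⟨ρ, hρ, h⟩ := Metric.eventually_nhds_iff.1 ((D.continuous.continuousAt.eventually_ne
    hD).and (hone.and (hsq.isLittleO.def (c := 2⁻¹) (by norm_num))))
  refine ⟨ρ, hρ, fun z hz => ?_⟩
  obtain ⟨h1, h2, h3⟩ := h (by rwa [dist_eq_norm] : dist z b < ρ)
  exact ⟨h1, h2, by simpa [hN] using h3⟩

/-- Where `‖R‖ ^ n` is bounded above and below, `‖R‖` is close to one for large `n`, and there the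
derivative `n * R ^ (n - 1) * R'` is large. -/
theorem eventually_two_le_norm_deriv_add_pow {R : ℂ → ℂ} {S : Set ℂ} {δ ρ : ℝ} (hδ : 0 < δ)
    (hδ1 : δ ≤ 1) (hρ : 0 < ρ) (hR : ∀ z ∉ S, DifferentiableAt ℂ R z)
    (hderiv : ∀ z ∉ S, |‖R z‖ - 1| < δ → δ ≤ ‖deriv R z‖) (b : ℂ) (M : ℝ) :
    ∀ᶠ n : ℕ in atTop, ∀ z ∉ S, ρ ≤ ‖R z‖ ^ n → ‖R z‖ ^ n ≤ M →
      2 ≤ ‖deriv (fun z => b + R z ^ n) z‖ := by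
  filter_upwards [(tendsto_pow_atTop_nhds_zero_of_lt_one (sub_nonneg.2 hδ1)
      (sub_lt_self 1 hδ)).eventually_lt_const hρ,
    (tendsto_pow_atTop_atTop_of_one_lt (lt_add_of_pos_right 1 hδ)).eventually_gt_atTop M,
    (tendsto_natCast_atTop_atTop.atTop_mul_const (mul_pos hρ hδ)).eventually_ge_atTop (2 * (1 + δ)),
    eventually_ne_atTop 0] with n hlow hhigh hn hn0 z hz hρz hMz
  have hgt : 1 - δ < ‖R z‖ := lt_of_pow_lt_pow_left₀ n (norm_nonneg _) (hlow.trans_le hρz)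
  have hlt : ‖R z‖ < 1 + δ := lt_of_pow_lt_pow_left₀ n (by linarith) (hMz.trans_lt hhigh)
  have hδz := hderiv z hz (abs_lt.2 ⟨by linarith, by linarith⟩)
  have hpos : 0 < ‖R z‖ := (sub_nonneg.2 hδ1).trans_lt hgt
  rw [(((hR z hz).hasDerivAt.fun_pow n).const_add b).deriv, norm_mul, norm_mul, norm_pow,
    Complex.norm_natCast]
  refine le_of_mul_le_mul_right ?_ hpos
  calc 2 * ‖R z‖ ≤ n * (ρ * δ) := by linarith
    _ ≤ n * (‖R z‖ ^ n * ‖deriv R z‖) := by gcongr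
    _ = n * ‖R z‖ ^ (n - 1) * ‖deriv R z‖ * ‖R z‖ := by rw [← pow_sub_one_mul hn0]; ring

namespace IsPolarFraction

variable {N D : ℂ[X]}

theorem exists_eventually_isExpandingPolarExtension_pow (h : IsPolarFraction N D) {b : ℂ}
    (hDb : D.eval b ≠ 0) (hNb : N.eval b = 0)
    (hcrit : ∀ z, ‖N.eval z‖ = ‖D.eval z‖ → (derivative N * D - N * derivative D).eval z ≠ 0) :
    ∃ M ρ : ℝ, ∀ᶠ n : ℕ in atTop,
      IsExpandingPolarExtension (ratMap (N ^ n + C b * D ^ n) (D ^ n))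
        (fun z => b + (N.eval z / D.eval z) ^ n) {z | D.eval z = 0} b M ρ := by
  obtain ⟨δ, hδ, hδ2, hderiv⟩ := h.exists_pos_le_norm_deriv hcrit
  obtain ⟨M, hM, hfar⟩ := h.exists_far (2 + ‖b‖)
  obtain ⟨ρ, hρ, hnear⟩ := exists_near hDb hNb
  refine ⟨M, ρ, ?_⟩
  filter_upwards [eventually_ge_atTop 2, eventually_two_le_norm_deriv_add_pow
    (S := {z | D.eval z = 0}) hδ (hδ2.trans one_half_lt_one.le) hρ
    (fun z hz => (hasDerivAt_eval_div N D hz).differentiableAt) hderiv b (M + ‖b‖)] with n hn hexp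
  refine ⟨h.isPolarExtension_pow b (zero_lt_two.trans_le hn).ne', zero_lt_one.trans_le hM, hρ,
    fun z hz => ?_, fun z hz => ?_, fun z hz h1 h2 => hexp z hz ?_ ?_⟩
  · obtain ⟨hD, h1, h2⟩ := hfar z hz
    have hpow := h2.trans (pow_le_pow_right₀ h1 hn)
    have htri := norm_sub_le_norm_add ((N.eval z / D.eval z) ^ n) b
    rw [norm_pow, add_comm _ b] at htri
    exact ⟨hD, by nlinarith [norm_nonneg b, hM.trans hz]⟩
  · obtain ⟨hD, h1, h2⟩ := hnear z hz
    rw [add_sub_cancel_left, norm_pow]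
    exact ⟨hD, (pow_le_pow_of_le_one (norm_nonneg _) h1 hn).trans h2⟩
  · rwa [add_sub_cancel_left, norm_pow] at h1
  · have htri := norm_sub_le_norm_add ((N.eval z / D.eval z) ^ n) b
    rw [norm_pow, add_comm _ b] at htri
    linarith

theorem exists_isBasinPair_of_regular (h : IsPolarFraction N D) {b : ℂ} (hDb : D.eval b ≠ 0)
    (hNb : N.eval b = 0)
    (hcrit : ∀ z, ‖N.eval z‖ = ‖D.eval z‖ → (derivative N * D - N * derivative D).eval z ≠ 0) :
    ∃ f : OnePoint ℂ → OnePoint ℂ, IsRationalMap f ∧ IsBasinPair f OnePoint.infty b ∧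
      (∀ z : ℂ, f z = OnePoint.infty ↔ D.eval z = 0) ∧
      (∀ z : ℂ, 2 * ‖D.eval z‖ ≤ ‖N.eval z‖ → (z : OnePoint ℂ) ∈ basin f OnePoint.infty) ∧
      ∀ z : ℂ, ‖N.eval z‖ ≤ 3 / 4 * ‖D.eval z‖ → (z : OnePoint ℂ) ∈ basin f b := by
  obtain ⟨M, ρ, hexp⟩ := h.exists_eventually_isExpandingPolarExtension_pow hDb hNb hcrit
  obtain ⟨n₀, hn₀⟩ := hexp.exists
  obtain ⟨n, hn, hn0, hnM, hnρ⟩ := (hexp.and ((eventually_ne_atTop 0).and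
    (((tendsto_pow_atTop_atTop_of_one_lt one_lt_two).eventually_ge_atTop (M + ‖b‖)).and
    ((tendsto_pow_atTop_nhds_zero_of_lt_one (r := (3 / 4 : ℝ)) (by norm_num)
      (by norm_num)).eventually_lt_const hn₀.ρ_pos)))).exists
  refine ⟨_, (h.pow_add_C_mul b hn0).isRationalMap_ratMap, hn.isBasinPair, fun z => ?_,
    fun z hz => ?_, fun z hz => ?_⟩
  · exact ratVal_eq_infty.trans (by rw [eval_pow, pow_eq_zero_iff hn0])
  · rw [← apply_mem_basin_iff]
    by_cases hD : D.eval z = 0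
    · rw [hn.map_pole z hD]
      exact mem_basin_self hn.map_infty
    · rw [hn.map_coe z hD]
      refine hn.mem_basin_infty_of_le_norm ?_
      have hR : 2 ≤ ‖N.eval z / D.eval z‖ := by rwa [norm_div, le_div_iff₀ (norm_pos_iff.2 hD)]
      have hpow := pow_le_pow_left₀ zero_le_two hR n
      have htri := norm_sub_le_norm_add ((N.eval z / D.eval z) ^ n) b
      rw [norm_pow, add_comm _ b] at htri
      linarith
  · have hD : D.eval z ≠ 0 := fun hD => eval_ne_zero_of_isCoprime h.isCoprime hD
      (norm_le_zero_iff.1 (by simpa [hD] using hz))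
    have hR : ‖N.eval z / D.eval z‖ ≤ 3 / 4 := by rwa [norm_div, div_le_iff₀ (norm_pos_iff.2 hD)]
    rw [← apply_mem_basin_iff, hn.map_coe z hD]
    refine hn.mem_basin_of_norm_sub_lt ?_
    rw [add_sub_cancel_left, norm_pow]
    exact (pow_le_pow_left₀ (norm_nonneg _) hR n).trans_lt hnρ

theorem derivative_mul_sub_ne_zero (h : IsPolarFraction N D) :
    derivative N * D - N * derivative D ≠ 0 := by
  intro h0
  have hdvd : D ∣ derivative D :=
    h.isCoprime.symm.dvd_of_dvd_mul_left ⟨derivative N, by linear_combination -h0⟩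
  rw [dvd_derivative_iff.1 hdvd, mul_zero, sub_zero, mul_eq_zero, or_iff_left h.den_ne_zero] at h0
  exact (Nat.zero_le _).not_gt (derivative_eq_zero.1 h0 ▸ h.natDegree_lt)

theorem C_mul (h : IsPolarFraction N D) {s : ℂ} (hs : s ≠ 0) : IsPolarFraction (C s * N) D where
  isCoprime := (isCoprime_mul_unit_left_left (isUnit_C.2 hs.isUnit) N D).2 h.isCoprime
  natDegree_lt := (natDegree_C_mul hs).symm ▸ h.natDegree_lt

/-- Rescaling by a generic `s ∈ [1, 3 / 2]` moves the critical values off the unit circle. -/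
theorem exists_isBasinPair (h : IsPolarFraction N D) {b : ℂ} (hDb : D.eval b ≠ 0)
    (hNb : N.eval b = 0) :
    ∃ f : OnePoint ℂ → OnePoint ℂ, IsRationalMap f ∧ IsBasinPair f OnePoint.infty b ∧
      (∀ z : ℂ, f z = OnePoint.infty ↔ D.eval z = 0) ∧
      (∀ z : ℂ, 2 * ‖D.eval z‖ ≤ ‖N.eval z‖ → (z : OnePoint ℂ) ∈ basin f OnePoint.infty) ∧
      ∀ z : ℂ, ‖N.eval z‖ ≤ 2⁻¹ * ‖D.eval z‖ → (z : OnePoint ℂ) ∈ basin f b := by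
  set W := derivative N * D - N * derivative D
  have hWfin : {z | W.IsRoot z}.Finite := finite_setOfPred_isRoot h.derivative_mul_sub_ne_zero
  obtain ⟨s, ⟨hs1, hs2⟩, hs⟩ := (Icc_infinite (by norm_num : (1 : ℝ) < 3 / 2)).exists_notMem_finite
    (hWfin.image fun z => ‖D.eval z‖ / ‖N.eval z‖)
  have hs0 : (s : ℂ) ≠ 0 := Complex.ofReal_ne_zero.2 (zero_lt_one.trans_le hs1).ne'
  have hnorm : ∀ z, ‖(C (s : ℂ) * N).eval z‖ = s * ‖N.eval z‖ := fun z => by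
    rw [eval_mul, eval_C, norm_mul, Complex.norm_real, Real.norm_of_nonneg (zero_le_one.trans hs1)]
  have hreg : ∀ z, ‖(C (s : ℂ) * N).eval z‖ = ‖D.eval z‖ →
      (derivative (C (s : ℂ) * N) * D - C (s : ℂ) * N * derivative D).eval z ≠ 0 := by
    intro z hz hcrit
    rw [hnorm] at hz
    have hW : W.eval z = 0 := by
      refine (mul_eq_zero.1 ?_).resolve_left hs0
      simpa [W, mul_sub, mul_assoc, derivative_mul] using hcrit
    have hN : ‖N.eval z‖ ≠ 0 := fun h0 => by
      rw [h0, mul_zero, eq_comm, norm_eq_zero] at hz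
      exact eval_ne_zero_of_isCoprime h.isCoprime hz (norm_eq_zero.1 h0)
    exact hs ⟨z, hW, by simp only; rw [← hz, mul_div_cancel_right₀ _ hN]⟩
  obtain ⟨f, hrat, hpair, hpole, hfar, hnear⟩ := (h.C_mul hs0).exists_isBasinPair_of_regular hDb
    (by rw [eval_mul, hNb, mul_zero]) hreg
  refine ⟨f, hrat, hpair, hpole, fun z hz => hfar z ?_, fun z hz => hnear z ?_⟩ <;>
  · rw [hnorm]
    nlinarith [norm_nonneg (N.eval z)]

end IsPolarFraction

/-! ### Möbius coordinates -/

/-- The inversion `z ↦ 1 / z` of the Riemann sphere. -/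
def sphereInversion (x : OnePoint ℂ) : OnePoint ℂ := x.elim ((0 : ℂ) : OnePoint ℂ) (ratVal 1 X)

theorem sphereInversion_coe {z : ℂ} (hz : z ≠ 0) :
    sphereInversion z = ((z⁻¹ : ℂ) : OnePoint ℂ) := by
  refine (ratVal_of_eval_ne_zero (by simpa using hz)).trans ?_
  simp

theorem sphereInversion_zero : sphereInversion ((0 : ℂ) : OnePoint ℂ) = OnePoint.infty :=
  ratVal_of_eval_eq_zero eval_X

theorem sphereInversion_involutive : Function.Involutive sphereInversion := by
  intro x
  induction x using OnePoint.rec with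
  | infty => exact sphereInversion_zero
  | coe z =>
    rcases eq_or_ne z 0 with rfl | hz
    · rw [sphereInversion_zero]
      rfl
    · rw [sphereInversion_coe hz, sphereInversion_coe (inv_ne_zero hz), inv_inv]

theorem continuous_sphereInversion : Continuous sphereInversion := by
  refine (OnePoint.continuous_iff _).2 ⟨?_, continuous_ratVal isCoprime_one_left⟩
  rw [coclosedCompact_eq_cocompact, ← Metric.cobounded_eq_cocompact]
  refine ((OnePoint.continuous_coe.tendsto 0).comp tendsto_inv₀_cobounded).congr' ?_
  filter_upwards [eventually_cobounded_eval_ne_zero X_ne_zero] with z hz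
  exact (sphereInversion_coe (by simpa using hz)).symm

/-- The Möbius transformation `z ↦ 1 / (z - c)` of the Riemann sphere. -/
def recipHomeomorph (c : ℂ) : OnePoint ℂ ≃ₜ OnePoint ℂ :=
  (Homeomorph.subRight c).onePointCongr.trans
    (continuous_sphereInversion.homeoOfEquivCompactToT2
      (f := sphereInversion_involutive.toPerm sphereInversion))

theorem recipHomeomorph_self (c : ℂ) : recipHomeomorph c c = OnePoint.infty := by
  rw [← sphereInversion_zero, ← sub_self c]
  rfl

theorem recipHomeomorph_coe {c z : ℂ} (h : z ≠ c) : recipHomeomorph c z = ((z - c)⁻¹ : ℂ) :=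
  sphereInversion_coe (sub_ne_zero.2 h)

theorem recipHomeomorph_symm_coe {c w : ℂ} (h : w ≠ 0) :
    (recipHomeomorph c).symm w = (c + w⁻¹ : ℂ) := by
  rw [Homeomorph.symm_apply_eq, recipHomeomorph_coe (by simpa using h), add_sub_cancel_left,
    inv_inv]

/-- A Möbius coordinate on the sphere with its pole at `q`. -/
def poleChart (q : OnePoint ℂ) : OnePoint ℂ ≃ₜ OnePoint ℂ := q.elim (.refl _) recipHomeomorph

/-- The finite values of `poleChart q`: the polynomials in `poleCoord q` are the principal parts
at `q`. -/
def poleCoord (q : OnePoint ℂ) (z : ℂ) : ℂ := q.elim z fun c => (z - c)⁻¹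

theorem poleChart_self (q : OnePoint ℂ) : poleChart q q = OnePoint.infty := by
  induction q using OnePoint.rec with
  | infty => rfl
  | coe c => exact recipHomeomorph_self c

theorem poleChart_coe {q : OnePoint ℂ} {z : ℂ} (h : (z : OnePoint ℂ) ≠ q) :
    poleChart q z = poleCoord q z := by
  induction q using OnePoint.rec with
  | infty => rfl
  | coe c => exact recipHomeomorph_coe fun hzc => h (congrArg _ hzc)

theorem eval_inv_eq_reverse_div (Q : ℂ[X]) {z : ℂ} (hz : z ≠ 0) :
    Q.eval z⁻¹ = Q.reverse.eval z / z ^ Q.natDegree := by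
  let _ : Invertible z⁻¹ := invertibleOfNonzero (inv_ne_zero hz)
  have h := eval₂_reverse_mul_pow (RingHom.id ℂ) z⁻¹ Q
  rw [invOf_eq_inv, inv_inv] at h
  rw [eq_div_iff (pow_ne_zero _ hz), ← eval₂_id, ← h, mul_assoc, ← mul_pow, inv_mul_cancel₀ hz,
    one_pow, mul_one, eval₂_id]

theorem exists_isCoprime_mul_eq_mul_eq {R : Type*} [EuclideanDomain R] (a : R) {b : R}
    (hb : b ≠ 0) : ∃ g p q : R, IsCoprime p q ∧ a = g * p ∧ b = g * q := by
  classical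
  obtain ⟨p, hp⟩ := EuclideanDomain.gcd_dvd_left a b
  obtain ⟨q, hq⟩ := EuclideanDomain.gcd_dvd_right a b
  refine ⟨_, p, q, ⟨EuclideanDomain.gcdA a b, EuclideanDomain.gcdB a b, ?_⟩, hp, hq⟩
  refine mul_left_cancel₀ (left_ne_zero_of_mul (hq ▸ hb)) ?_
  linear_combination EuclideanDomain.gcdA a b * (-hp) + EuclideanDomain.gcdB a b * (-hq) -
    EuclideanDomain.gcd_eq_gcd_ab a b

namespace IsRationalMap

variable {r : OnePoint ℂ → OnePoint ℂ}

theorem of_continuous (hr : Continuous r) {x y : OnePoint ℂ} (hxy : r x ≠ r y) {N D : ℂ[X]}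
    (h : ∀ᶠ z : ℂ in cofinite,
      D.eval z ≠ 0 ∧ r z = ((N.eval z / D.eval z : ℂ) : OnePoint ℂ)) :
    IsRationalMap r := by
  obtain ⟨z₀, hz₀, -⟩ := h.exists
  obtain ⟨G, p, q, hcop, rfl, rfl⟩ :=
    exists_isCoprime_mul_eq_mul_eq N (b := D) fun h0 => hz₀ (by rw [h0, eval_zero])
  have hval : (fun z : ℂ => r z) = ratVal p q := by
    refine Continuous.ext_on ((mem_cofinite.1 h).countable.dense_compl ℝ)
      (hr.comp OnePoint.continuous_coe) (continuous_ratVal hcop) fun z hz => ?_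
    obtain ⟨hD, hrz⟩ := not_not.1 hz
    rw [eval_mul] at hD
    rw [hrz, ratVal_of_eval_ne_zero (right_ne_zero_of_mul hD), eval_mul, eval_mul,
      mul_div_mul_left _ _ (left_ne_zero_of_mul hD)]
  refine ⟨hr, p, q, hcop, ?_, fun z hz => (congrFun hval z).trans (ratVal_of_eval_ne_zero hz)⟩
  rintro ⟨hp0, hq0⟩
  obtain ⟨a, rfl⟩ := natDegree_eq_zero.1 hp0
  obtain ⟨b, rfl⟩ := natDegree_eq_zero.1 hq0
  have hconst : r = fun _ => ratVal (C a) (C b) 0 := by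
    refine Continuous.ext_on (OnePoint.denseRange_coe (X := ℂ)) hr continuous_const ?_
    rintro _ ⟨z, rfl⟩
    rw [congrFun hval z]
    simp [ratVal]
  rw [hconst] at hxy
  exact hxy rfl

theorem conj_poleChart (hr : IsRationalMap r) {x y : OnePoint ℂ} (hxy : r x ≠ r y)
    (q : OnePoint ℂ) : IsRationalMap ((poleChart q).symm ∘ r ∘ poleChart q) := by
  induction q using OnePoint.rec with
  | infty => exact hr
  | coe c =>
  obtain ⟨hrc, N, D, hcop, hdeg, hND⟩ := hr
  have hN : N ≠ 0 := by
    rintro rfl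
    exact hdeg ⟨natDegree_zero, natDegree_eq_zero_of_isUnit (isCoprime_zero_left.1 hcop)⟩
  have hD : D ≠ 0 := by
    rintro rfl
    exact hdeg ⟨natDegree_eq_zero_of_isUnit (isCoprime_zero_right.1 hcop), natDegree_zero⟩
  have hgood : ∀ᶠ u in cofinite, (X * N.reverse * D.reverse).eval u ≠ 0 :=
    eventually_cofinite_eval_ne_zero (by simp [hN, hD])
  let T : ℂ[X] := X ^ D.natDegree * N.reverse
  refine of_continuous (x := (poleChart c).symm x) (y := (poleChart c).symm y)
    (N := (C c * T + X ^ N.natDegree * D.reverse).comp (X - C c)) (D := T.comp (X - C c))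
    (by fun_prop) (by simpa using hxy) ?_
  filter_upwards [(sub_left_injective (b := c)).tendsto_cofinite.eventually hgood] with z hz
  simp only [eval_mul, eval_X, mul_ne_zero_iff] at hz
  obtain ⟨⟨hu, hNu⟩, hDu⟩ := hz
  have hN' : N.eval (z - c)⁻¹ ≠ 0 := by
    rw [eval_inv_eq_reverse_div N hu]
    exact div_ne_zero hNu (pow_ne_zero _ hu)
  have hD' : D.eval (z - c)⁻¹ ≠ 0 := by
    rw [eval_inv_eq_reverse_div D hu]
    exact div_ne_zero hDu (pow_ne_zero _ hu)
  simp only [T, eval_comp, eval_add, eval_sub, eval_mul, eval_pow, eval_X, eval_C]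
  refine ⟨mul_ne_zero (pow_ne_zero _ hu) hNu, ?_⟩
  calc (recipHomeomorph c).symm (r (recipHomeomorph c z))
      = ((c + (N.eval (z - c)⁻¹ / D.eval (z - c)⁻¹)⁻¹ : ℂ) : OnePoint ℂ) := by
        rw [recipHomeomorph_coe (sub_ne_zero.1 hu), hND _ hD',
          recipHomeomorph_symm_coe (div_ne_zero hN' hD')]
    _ = _ := by
        rw [OnePoint.coe_eq_coe, eval_inv_eq_reverse_div N hu, eval_inv_eq_reverse_div D hu]
        field_simp

end IsRationalMap

/-! ### Sums of principal parts -/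

/-- The sum over `q ∈ T` of the principal part `Q q` at `q`, a polynomial in `poleCoord q`. -/
def principalSum (T : Finset (OnePoint ℂ)) (Q : OnePoint ℂ → ℂ[X]) (z : ℂ) : ℂ :=
  ∑ q ∈ T, (Q q).eval (poleCoord q z)

theorem isCoprime_X_sub_C_right {N : ℂ[X]} {c : ℂ} (h : N.eval c ≠ 0) :
    IsCoprime N (X - C c) :=
  (((irreducible_X_sub_C c).coprime_iff_not_dvd).2 fun hd => h (dvd_iff_isRoot.1 hd)).symm

theorem IsPolarFraction.add_principalPart {N D Q : ℂ[X]} (h : IsPolarFraction N D) {c : ℂ}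
    (hc : D.eval c ≠ 0) (hQ : Q ≠ 0) :
    IsPolarFraction (N * (X - C c) ^ Q.natDegree + D * Q.reverse.comp (X - C c))
      (D * (X - C c) ^ Q.natDegree) where
  isCoprime := by
    have hQc : (Q.reverse.comp (X - C c)).eval c ≠ 0 := by
      simpa [← coeff_zero_eq_eval_zero] using hQ
    have hD : IsCoprime D ((X - C c) ^ Q.natDegree) := (isCoprime_X_sub_C_right hc).pow_right
    refine IsCoprime.mul_right ?_ ?_
    · exact (h.isCoprime.mul_left hD.symm).add_mul_left_left _
    · rw [add_comm, mul_comm N]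
      exact (hD.mul_left (isCoprime_X_sub_C_right hQc).pow_right).add_mul_left_left N
  natDegree_lt := by
    have hmul {F : ℂ[X]} (hF : F ≠ 0) :
        (F * (X - C c) ^ Q.natDegree).natDegree = F.natDegree + Q.natDegree := by
      rw [natDegree_mul hF (pow_ne_zero _ (X_sub_C_ne_zero c)), natDegree_pow, natDegree_X_sub_C,
        mul_one]
    have hrev : (Q.reverse.comp (X - C c)).natDegree ≤ Q.natDegree := by
      rw [natDegree_comp, natDegree_X_sub_C, mul_one]
      exact reverse_natDegree_le Q
    have hlt : (D * Q.reverse.comp (X - C c)).natDegree <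
        (N * (X - C c) ^ Q.natDegree).natDegree := by
      rw [hmul (ne_zero_of_natDegree_gt h.natDegree_lt)]
      exact natDegree_mul_le.trans_lt (add_lt_add_of_lt_of_le h.natDegree_lt hrev)
    rw [natDegree_add_eq_left_of_natDegree_lt hlt, hmul h.den_ne_zero,
      hmul (ne_zero_of_natDegree_gt h.natDegree_lt)]
    exact Nat.add_lt_add_right h.natDegree_lt _

theorem eval_add_principalPart {N D Q : ℂ[X]} {c z : ℂ} (hz : z ≠ c) (hD : D.eval z ≠ 0) :
    (N * (X - C c) ^ Q.natDegree + D * Q.reverse.comp (X - C c)).eval z /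
      (D * (X - C c) ^ Q.natDegree).eval z = Q.eval (z - c)⁻¹ + N.eval z / D.eval z := by
  have hzc : z - c ≠ 0 := sub_ne_zero.2 hz
  rw [eval_inv_eq_reverse_div _ hzc]
  simp only [eval_add, eval_mul, eval_pow, eval_sub, eval_X, eval_C, eval_comp]
  field_simp
  ring

theorem exists_isPolarFraction_eval_div_eq_add (T : Finset (OnePoint ℂ)) (hT : OnePoint.infty ∉ T)
    {Q : OnePoint ℂ → ℂ[X]} (hQ : ∀ q ∈ T, 0 < (Q q).natDegree) {Q₀ : ℂ[X]}
    (hQ₀ : 0 < Q₀.natDegree) :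
    ∃ N D : ℂ[X], IsPolarFraction N D ∧ (∀ z : ℂ, D.eval z = 0 ↔ (z : OnePoint ℂ) ∈ T) ∧
      ∀ z : ℂ, (z : OnePoint ℂ) ∉ T → N.eval z / D.eval z = principalSum T Q z + Q₀.eval z := by
  classical
  induction T using Finset.induction_on with
  | empty => exact ⟨Q₀, 1, ⟨isCoprime_one_right, by simpa using hQ₀⟩, by simp,
      by simp [principalSum]⟩
  | insert q T hqT ih =>
    obtain ⟨hq, hT⟩ := not_or.1 (mt Finset.mem_insert.2 hT)
    obtain ⟨N, D, hND, hD, hval⟩ := ih hT fun x hx => hQ x (Finset.mem_insert_of_mem hx)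
    obtain ⟨c, rfl⟩ := OnePoint.ne_infty_iff_exists.1 (Ne.symm hq)
    have hdeg := hQ c (Finset.mem_insert_self _ T)
    refine ⟨_, _, hND.add_principalPart (mt (hD c).1 hqT) (ne_zero_of_natDegree_gt hdeg),
      fun z => ?_, fun z hz => ?_⟩
    · rw [eval_mul, mul_eq_zero, hD, Finset.mem_insert, OnePoint.coe_eq_coe]
      simp [hdeg.ne', sub_eq_zero, or_comm]
    · obtain ⟨hzc, hzT⟩ := not_or.1 (mt Finset.mem_insert.2 hz)
      rw [eval_add_principalPart (fun h => hzc (congrArg _ h)) (mt (hD z).1 hzT), hval z hzT,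
        principalSum, principalSum, Finset.sum_insert hqT, add_assoc]
      rfl

theorem exists_isPolarFraction_eval_div_eq_sub (T : Finset (OnePoint ℂ)) (hT : OnePoint.infty ∈ T)
    {Q : OnePoint ℂ → ℂ[X]} (hQ : ∀ q ∈ T, 0 < (Q q).natDegree) (a : ℂ) :
    ∃ N D : ℂ[X], IsPolarFraction N D ∧ (∀ z : ℂ, D.eval z = 0 ↔ (z : OnePoint ℂ) ∈ T) ∧
      ∀ z : ℂ, (z : OnePoint ℂ) ∉ T → N.eval z / D.eval z = principalSum T Q z - a := by
  classical
  obtain ⟨N, D, hND, hD, hval⟩ := exists_isPolarFraction_eval_div_eq_add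
    (T.erase OnePoint.infty) (Finset.notMem_erase _ T)
    (fun q hq => hQ q (Finset.mem_of_mem_erase hq))
    (Q₀ := Q OnePoint.infty - C a) (by simpa using hQ _ hT)
  simp only [Finset.mem_erase, ne_eq, OnePoint.coe_ne_infty, not_false_eq_true, true_and]
    at hD hval
  refine ⟨N, D, hND, hD, fun z hz => ?_⟩
  rw [hval z hz, principalSum, principalSum, ← Finset.sum_erase_add _ _ hT, eval_sub, eval_C,
    ← add_sub_assoc]
  rfl

theorem exists_isBasinPair_principalSum (T : Finset (OnePoint ℂ)) (hT : OnePoint.infty ∈ T)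
    {Q : OnePoint ℂ → ℂ[X]} (hQ : ∀ q ∈ T, 0 < (Q q).natDegree) {b : ℂ}
    (hb : (b : OnePoint ℂ) ∉ T) (hQb : ‖principalSum T Q b‖ ≤ 1 / 4) :
    ∃ f : OnePoint ℂ → OnePoint ℂ, IsRationalMap f ∧ IsBasinPair f OnePoint.infty b ∧
      f ⁻¹' {OnePoint.infty} = T ∧
      (∀ z : ℂ, (z : OnePoint ℂ) ∉ T → 3 ≤ ‖principalSum T Q z‖ →
        (z : OnePoint ℂ) ∈ basin f OnePoint.infty) ∧
      ∀ z : ℂ, (z : OnePoint ℂ) ∉ T → ‖principalSum T Q z‖ ≤ 1 / 4 →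
        (z : OnePoint ℂ) ∈ basin f b := by
  obtain ⟨N, D, hND, hD, hval⟩ :=
    exists_isPolarFraction_eval_div_eq_sub T hT hQ (principalSum T Q b)
  have hDne : ∀ z : ℂ, (z : OnePoint ℂ) ∉ T → D.eval z ≠ 0 := fun z => mt (hD z).1
  have hNb : N.eval b = 0 := by
    have h0 := hval b hb
    rw [sub_self, div_eq_zero_iff] at h0
    exact h0.resolve_right (hDne b hb)
  have hnorm : ∀ z : ℂ, (z : OnePoint ℂ) ∉ T →
      ‖N.eval z‖ = ‖principalSum T Q z - principalSum T Q b‖ * ‖D.eval z‖ := fun z hz => by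
    rw [← hval z hz, norm_div, div_mul_cancel₀ _ (norm_ne_zero_iff.2 (hDne z hz))]
  obtain ⟨f, hf, hpair, hpole, hfar, hnear⟩ := hND.exists_isBasinPair (hDne b hb) hNb
  refine ⟨f, hf, hpair, ?_, fun z hz hz' => hfar z ?_, fun z hz hz' => hnear z ?_⟩
  · ext x
    induction x using OnePoint.rec with
    | infty => simp [hpair.map_left, hT]
    | coe z => simp [hpole, hD]
  · rw [hnorm z hz]
    gcongr
    linarith [norm_sub_norm_le (principalSum T Q z) (principalSum T Q b)]
  · rw [hnorm z hz]
    gcongr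
    linarith [norm_sub_le (principalSum T Q z) (principalSum T Q b)]

/-! ### Basins with prescribed preimages -/

/-- The fixed points `p` and `w` of `r` have basins as in `IsBasinPair` containing `E` and `F`
respectively, and `P` is the full preimage of `p`. -/
structure SeparatesBasins (r : OnePoint ℂ → OnePoint ℂ) (P : Set (OnePoint ℂ)) (p w : OnePoint ℂ)
    (E F : Set (OnePoint ℂ)) : Prop extends IsBasinPair r p w where
  preimage_left : r ⁻¹' {p} = P
  subset_left : E ⊆ basin r p
  subset_right : F ⊆ basin r w

section Conjugation

variable {r : OnePoint ℂ → OnePoint ℂ} {P E F : Set (OnePoint ℂ)} {p w : OnePoint ℂ}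

theorem basin_conj (φ : OnePoint ℂ ≃ₜ OnePoint ℂ) (r : OnePoint ℂ → OnePoint ℂ)
    (w : OnePoint ℂ) : basin (φ.symm ∘ r ∘ φ) (φ.symm w) = φ ⁻¹' basin r w := by
  have hsc : Function.Semiconj φ (φ.symm ∘ r ∘ φ) r := fun x => by simp
  ext x
  constructor
  · intro hx
    have h := (φ.continuous.tendsto (φ.symm w)).comp hx
    rw [φ.apply_symm_apply] at h
    exact h.congr fun n => hsc.iterate_right n x
  · intro hx
    refine ((φ.symm.continuous.tendsto w).comp hx).congr fun n => ?_
    rw [Function.comp_apply, ← hsc.iterate_right n x, φ.symm_apply_apply]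

theorem IsBasinPair.conj (h : IsBasinPair r p w) (φ : OnePoint ℂ ≃ₜ OnePoint ℂ) :
    IsBasinPair (φ.symm ∘ r ∘ φ) (φ.symm p) (φ.symm w) where
  map_left := by simp [h.map_left]
  map_right := by simp [h.map_right]
  ne := φ.symm.injective.ne h.ne
  isOpen_left := basin_conj φ r p ▸ h.isOpen_left.preimage φ.continuous
  isOpen_right := basin_conj φ r w ▸ h.isOpen_right.preimage φ.continuous
  frontier_left := by
    rw [basin_conj, basin_conj, ← φ.preimage_frontier, h.frontier_left]
    rfl
  frontier_right := by
    rw [basin_conj, basin_conj, ← φ.preimage_frontier, h.frontier_right]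
    rfl

theorem SeparatesBasins.conj (h : SeparatesBasins r P p w E F) (φ : OnePoint ℂ ≃ₜ OnePoint ℂ) :
    SeparatesBasins (φ.symm ∘ r ∘ φ) (φ ⁻¹' P) (φ.symm p) (φ.symm w) (φ ⁻¹' E) (φ ⁻¹' F) where
  toIsBasinPair := h.toIsBasinPair.conj φ
  preimage_left := by
    rw [← h.preimage_left]
    ext x
    simp
  subset_left := basin_conj φ r p ▸ preimage_mono h.subset_left
  subset_right := basin_conj φ r w ▸ preimage_mono h.subset_right

end Conjugation

/-- Pairwise disjoint domains `U q` containing the points `q ∈ P`. -/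
structure IsPointedDomainFamily {X : Type*} [TopologicalSpace X] (P : Set X) (U : X → Set X) :
    Prop where
  isOpen : ∀ q ∈ P, IsOpen (U q)
  isPreconnected : ∀ q ∈ P, IsPreconnected (U q)
  mem : ∀ q ∈ P, q ∈ U q
  pairwiseDisjoint : P.PairwiseDisjoint U

theorem isPointedDomainFamily_connectedComponentIn {X : Type*} [TopologicalSpace X]
    [LocallyConnectedSpace X] {A P : Set X} (hA : IsOpen A) (hPA : P ⊆ A)
    (hinj : InjOn (connectedComponentIn A) P) :
    IsPointedDomainFamily P (connectedComponentIn A) where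
  isOpen _ _ := hA.connectedComponentIn
  isPreconnected _ _ := isPreconnected_connectedComponentIn
  mem _ hq := mem_connectedComponentIn (hPA hq)
  pairwiseDisjoint _ hq _ hq' hne := Set.disjoint_left.2 fun _ hx hx' =>
    hne (hinj hq hq' ((connectedComponentIn_eq hx).trans (connectedComponentIn_eq hx').symm))

theorem exists_polynomial_lemniscate_chart (φ : OnePoint ℂ ≃ₜ OnePoint ℂ) {q : OnePoint ℂ}
    (hφ : φ q = OnePoint.infty) {U E : Set (OnePoint ℂ)} (hU : IsOpen U)
    (hconn : IsPreconnected U) (hq : q ∈ U) (hinf : Uᶜ.Infinite) (hE : IsCompact E) (hEU : E ⊆ U)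
    {B : ℝ} (hB : 0 < B) :
    ∃ Q : ℂ[X], 0 < Q.natDegree ∧ ∀ (x : OnePoint ℂ) (w : ℂ), φ x = w →
      (x ∉ U → ‖Q.eval w‖ ≤ B⁻¹) ∧ (x ∈ E → B ≤ ‖Q.eval w‖) := by
  obtain ⟨Q, hdeg, hsmall, hlarge⟩ := exists_polynomial_lemniscate (U := φ '' U) (E := φ '' E)
    (φ.isOpenMap U hU) (hconn.image φ φ.continuous.continuousOn) ⟨q, hq, hφ⟩
    (image_compl_eq φ.bijective ▸ hinf.image φ.injective.injOn)
    (hE.image φ.continuous) (image_mono hEU) hB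
  refine ⟨Q, hdeg, fun x w hxw => ⟨fun hx => hsmall w ?_, fun hx => hlarge w ⟨x, hx, hxw⟩⟩⟩
  rwa [← hxw, φ.injective.mem_set_image]

theorem sub_card_mul_le_norm_sum {ι E : Type*} [SeminormedAddCommGroup E] {T : Finset ι}
    {g : ι → E} {j : ι} (hj : j ∈ T) {δ : ℝ} (hδ : ∀ i ∈ T, i ≠ j → ‖g i‖ ≤ δ) (hδ0 : 0 ≤ δ) :
    ‖g j‖ - T.card * δ ≤ ‖∑ i ∈ T, g i‖ := by
  classical
  have hrest : ‖∑ i ∈ T.erase j, g i‖ ≤ T.card * δ := calc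
    ‖∑ i ∈ T.erase j, g i‖ ≤ ∑ _i ∈ T.erase j, δ := norm_sum_le_of_le _ fun _ hi =>
        hδ _ (Finset.mem_of_mem_erase hi) (Finset.ne_of_mem_erase hi)
    _ ≤ ∑ _i ∈ T, δ := Finset.sum_le_sum_of_subset_of_nonneg (T.erase_subset j) fun _ _ _ => hδ0
    _ = T.card * δ := by rw [Finset.sum_const, nsmul_eq_mul]
  rw [← Finset.add_sum_erase T g hj]
  linarith [norm_sub_le_norm_add (g j) (∑ i ∈ T.erase j, g i)]

namespace IsPointedDomainFamily

theorem image_homeomorph {X : Type*} [TopologicalSpace X] {P : Set X} {U : X → Set X}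
    (h : IsPointedDomainFamily P U) (φ : X ≃ₜ X) :
    IsPointedDomainFamily (φ '' P) fun q => φ '' U (φ.symm q) where
  isOpen := forall_mem_image.2 fun q hq => by simpa using h.isOpen q hq
  isPreconnected := forall_mem_image.2 fun q hq => by
    simpa using (h.isPreconnected q hq).image φ φ.continuous.continuousOn
  mem := forall_mem_image.2 fun q hq => by simpa using h.mem q hq
  pairwiseDisjoint := by
    rintro _ ⟨q, hq, rfl⟩ _ ⟨q', hq', rfl⟩ hne
    simpa [Function.onFun, disjoint_image_iff φ.injective] using
      h.pairwiseDisjoint hq hq' fun h0 => hne (congrArg φ h0)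

variable {U : OnePoint ℂ → Set (OnePoint ℂ)} {E : Set (OnePoint ℂ)}

theorem exists_principalParts {P : Set (OnePoint ℂ)} (h : IsPointedDomainFamily P U)
    (hinf : (⋃ q ∈ P, U q)ᶜ.Infinite) (hE : IsCompact E) (hEU : E ⊆ ⋃ q ∈ P, U q) {B : ℝ}
    (hB : 0 < B) :
    ∃ Q : OnePoint ℂ → ℂ[X], ∀ q ∈ P, 0 < (Q q).natDegree ∧ ∀ z : ℂ, (z : OnePoint ℂ) ≠ q →
      ((z : OnePoint ℂ) ∉ U q → ‖(Q q).eval (poleCoord q z)‖ ≤ B⁻¹) ∧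
      ((z : OnePoint ℂ) ∈ E → (z : OnePoint ℂ) ∈ U q → B ≤ ‖(Q q).eval (poleCoord q z)‖) := by
  suffices hex : ∀ q, ∃ Q : ℂ[X], q ∈ P → 0 < Q.natDegree ∧ ∀ z : ℂ, (z : OnePoint ℂ) ≠ q →
      ((z : OnePoint ℂ) ∉ U q → ‖Q.eval (poleCoord q z)‖ ≤ B⁻¹) ∧
      ((z : OnePoint ℂ) ∈ E → (z : OnePoint ℂ) ∈ U q → B ≤ ‖Q.eval (poleCoord q z)‖) from
    Classical.axiom_of_choice hex
  intro q
  by_cases hq : q ∈ P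
  swap
  · exact ⟨0, fun hq' => absurd hq' hq⟩
  have hsep : ∀ x ∈ E, x ∈ U q ↔ x ∉ ⋃ q' ∈ P \ {q}, U q' := by
    intro x hx
    obtain ⟨q', hq', hxq'⟩ := mem_iUnion₂.1 (hEU hx)
    simp only [mem_iUnion₂, not_exists]
    refine ⟨fun hxq q'' hq'' hxq'' => hq''.2 ?_, fun hxq => ?_⟩
    · exact h.pairwiseDisjoint.elim_set hq''.1 hq x hxq'' hxq
    · by_cases hqq' : q' = q
      · exact hqq' ▸ hxq'
      · exact absurd hxq' (hxq q' ⟨hq', hqq'⟩)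
  obtain ⟨Q, hdeg, hQ⟩ := exists_polynomial_lemniscate_chart (poleChart q) (poleChart_self q)
    (E := E \ ⋃ q' ∈ P \ {q}, U q') (h.isOpen q hq) (h.isPreconnected q hq) (h.mem q hq)
    (hinf.mono (compl_subset_compl.2 (subset_biUnion_of_mem hq)))
    (hE.diff (isOpen_biUnion fun q' hq' => h.isOpen q' hq'.1))
    (fun x hx => (hsep x hx.1).2 hx.2) hB
  exact ⟨Q, fun _ => ⟨hdeg, fun z hz => ⟨(hQ z _ (poleChart_coe hz)).1, fun hzE hzU =>
    (hQ z _ (poleChart_coe hz)).2 ⟨hzE, (hsep z hzE).1 hzU⟩⟩⟩⟩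

/-- With `n` points in `P`, principal parts bounded by `1 / (4 * n)` off their domains add up to at
most `1 / 4`. -/
theorem exists_separating_principalSum {P : Finset (OnePoint ℂ)} (hP : P.Nonempty)
    (h : IsPointedDomainFamily (P : Set (OnePoint ℂ)) U) (hinf : (⋃ q ∈ P, U q)ᶜ.Infinite)
    (hE : IsCompact E) (hEU : E ⊆ ⋃ q ∈ P, U q) :
    ∃ Q : OnePoint ℂ → ℂ[X], (∀ q ∈ P, 0 < (Q q).natDegree) ∧
      (∀ z : ℂ, (z : OnePoint ℂ) ∉ ⋃ q ∈ P, U q → ‖principalSum P Q z‖ ≤ 1 / 4) ∧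
      ∀ z : ℂ, (z : OnePoint ℂ) ∉ P → (z : OnePoint ℂ) ∈ E → 3 ≤ ‖principalSum P Q z‖ := by
  have hcard : (1 : ℝ) ≤ P.card := by exact_mod_cast hP.card_pos
  obtain ⟨Q, hQ⟩ := h.exists_principalParts hinf hE hEU (B := 4 * P.card) (by positivity)
  have hquarter : P.card * (4 * P.card : ℝ)⁻¹ = 1 / 4 := by field_simp
  refine ⟨Q, fun q hq => (hQ q hq).1, fun z hz => ?_, fun z hz hzE => ?_⟩
  · have hzU : ∀ q ∈ P, (z : OnePoint ℂ) ∉ U q := fun q hq hzq => hz (mem_biUnion hq hzq)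
    calc ‖principalSum P Q z‖ ≤ ∑ q ∈ P, (4 * P.card : ℝ)⁻¹ := norm_sum_le_of_le P fun q hq =>
          ((hQ q hq).2 z fun hzq => hzU q hq (hzq ▸ h.mem q hq)).1 (hzU q hq)
      _ = 1 / 4 := by rw [Finset.sum_const, nsmul_eq_mul, hquarter]
  · have hzP : ∀ q ∈ P, (z : OnePoint ℂ) ≠ q := fun q hq hzq => hz (hzq ▸ hq)
    obtain ⟨q, hq, hzq⟩ := mem_iUnion₂.1 (hEU hzE)
    have hlarge := ((hQ q hq).2 z (hzP q hq)).2 hzE hzq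
    have hsum := sub_card_mul_le_norm_sum (g := fun q => (Q q).eval (poleCoord q z)) hq
      (fun q' hq' hne => ((hQ q' hq').2 z (hzP q' hq')).1 fun hzq' =>
        hne (h.pairwiseDisjoint.elim_set hq' hq _ hzq' hzq)) (by positivity)
    rw [hquarter] at hsum
    exact le_trans (by linarith) hsum

theorem exists_separatesBasins_infty {P : Finset (OnePoint ℂ)} (hP : OnePoint.infty ∈ P)
    (h : IsPointedDomainFamily (P : Set (OnePoint ℂ)) U) (hinf : (⋃ q ∈ P, U q)ᶜ.Infinite)
    (hE : IsCompact E) (hEU : E ⊆ ⋃ q ∈ P, U q) :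
    ∃ (r : OnePoint ℂ → OnePoint ℂ) (w : OnePoint ℂ), IsRationalMap r ∧
      SeparatesBasins r P OnePoint.infty w E (⋃ q ∈ P, U q)ᶜ := by
  obtain ⟨Q, hdeg, hsmall, hlarge⟩ := h.exists_separating_principalSum ⟨_, hP⟩ hinf hE hEU
  have hPU : ∀ q ∈ P, q ∈ ⋃ q ∈ P, U q := fun q hq => mem_biUnion hq (h.mem q hq)
  have hcoe : ∀ x ∈ (⋃ q ∈ P, U q)ᶜ, ∃ z : ℂ, (z : OnePoint ℂ) = x := fun x hx =>
    OnePoint.ne_infty_iff_exists.1 fun hx' => hx (hx' ▸ hPU _ hP)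
  obtain ⟨x, hx⟩ := hinf.nonempty
  obtain ⟨b, rfl⟩ := hcoe x hx
  obtain ⟨r, hr, hpair, hpre, hfar, hnear⟩ :=
    exists_isBasinPair_principalSum P hP hdeg (mt (hPU b) hx) (hsmall b hx)
  refine ⟨r, b, hr, { hpair with
    preimage_left := hpre
    subset_left := fun x hx => ?_
    subset_right := fun x hx => ?_ }⟩
  · by_cases hxP : x ∈ P
    · have hrx : r x = OnePoint.infty := hpre.superset hxP
      rw [← apply_mem_basin_iff, hrx]
      exact mem_basin_self hpair.map_left
    · obtain ⟨z, rfl⟩ := OnePoint.ne_infty_iff_exists.1 (ne_of_mem_of_not_mem hP hxP).symm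
      exact hfar z hxP (hlarge z hxP hx)
  · obtain ⟨z, rfl⟩ := hcoe x hx
    exact hnear z (mt (hPU z) hx) (hsmall z hx)

theorem exists_separatesBasins {P : Set (OnePoint ℂ)} (h : IsPointedDomainFamily P U)
    (hPfin : P.Finite) {p : OnePoint ℂ} (hp : p ∈ P) (hinf : (⋃ q ∈ P, U q)ᶜ.Infinite)
    (hE : IsCompact E) (hEU : E ⊆ ⋃ q ∈ P, U q) :
    ∃ (r : OnePoint ℂ → OnePoint ℂ) (w : OnePoint ℂ), IsRationalMap r ∧
      SeparatesBasins r P p w E (⋃ q ∈ P, U q)ᶜ := by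
  set φ := poleChart p
  have hφp : φ p = OnePoint.infty := poleChart_self p
  obtain ⟨T, hT⟩ := (hPfin.image φ).exists_finset_coe
  have hUn : ⋃ q ∈ T, φ '' U (φ.symm q) = φ '' ⋃ q ∈ P, U q := by
    simp only [← Finset.mem_coe, hT, biUnion_image, φ.symm_apply_apply, image_iUnion₂]
  obtain ⟨r, w, hr, hsep⟩ := exists_separatesBasins_infty (P := T) (E := φ '' E)
    (U := fun q => φ '' U (φ.symm q)) (by rw [← Finset.mem_coe, hT]; exact ⟨p, hp, hφp⟩)
    (hT ▸ h.image_homeomorph φ)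
    (by rw [hUn, ← image_compl_eq φ.bijective]; exact hinf.image φ.injective.injOn)
    (hE.image φ.continuous) (by rw [hUn]; exact image_mono hEU)
  have hconj := hsep.conj φ
  rw [hUn, hT, ← image_compl_eq φ.bijective, preimage_image_eq _ φ.injective,
    preimage_image_eq _ φ.injective, preimage_image_eq _ φ.injective, ← hφp,
    φ.symm_apply_apply] at hconj
  refine ⟨_, _, hr.conj_poleChart (x := OnePoint.infty) (y := w) ?_ p, hconj⟩
  rw [hsep.map_left, hsep.map_right]
  exact hsep.ne

end IsPointedDomainFamily

/-! ### Approximation by basins -/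

theorem exists_separatesBasins_connectedComponentIn {A P E : Set (OnePoint ℂ)} (hA : IsOpen A)
    (hinf : Aᶜ.Infinite) (hPfin : P.Finite) (hPA : P ⊆ A)
    (hinj : InjOn (connectedComponentIn A) P) {p : OnePoint ℂ} (hp : p ∈ P) (hE : IsCompact E)
    (hEP : E ⊆ ⋃ q ∈ P, connectedComponentIn A q) :
    ∃ (r : OnePoint ℂ → OnePoint ℂ) (w : OnePoint ℂ), IsRationalMap r ∧
      SeparatesBasins r P p w E Aᶜ := by
  have hsub : Aᶜ ⊆ (⋃ q ∈ P, connectedComponentIn A q)ᶜ :=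
    compl_subset_compl.2 <| iUnion₂_subset fun q _ => connectedComponentIn_subset A q
  obtain ⟨r, w, hr, hsep⟩ := (isPointedDomainFamily_connectedComponentIn hA hPA
    hinj).exists_separatesBasins hPfin hp (hinf.mono hsub) hE hEP
  exact ⟨r, w, hr, { hsep with subset_right := hsub.trans hsep.subset_right }⟩

theorem infinite_of_isOpen_onePoint {A : Set (OnePoint ℂ)} (hA : IsOpen A) (hne : A.Nonempty) :
    A.Infinite := by
  obtain ⟨z, hz⟩ := OnePoint.denseRange_coe.exists_mem_open hA hne
  exact ((infinite_of_mem_nhds z ((hA.preimage OnePoint.continuous_coe).mem_nhds hz)).image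
    OnePoint.coe_injective.injOn).mono (image_preimage_subset _ _)

theorem exists_isCompact_forall_goodBasins (m : MetricSpace (OnePoint ℂ))
    (hm : InducesSphereTopology m) {ε : ℝ} (hε : 0 < ε) {A₁ A₂ J : Set (OnePoint ℂ)}
    (h₂ : IsOpen A₂) (hdisj : Disjoint A₁ A₂) (hJ₁ : frontier A₁ = J) (hJ₂ : frontier A₂ = J)
    (hcover : A₁ ∪ A₂ ∪ J = univ) :
    ∃ C, IsCompact C ∧ C ⊆ A₁ ∧ ∀ {r p w}, IsBasinPair r p w → C ⊆ basin r p → A₂ ⊆ basin r w →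
      GoodBasins m ε A₁ A₂ J r p w := by
  obtain ⟨C, hC, hCA, happrox⟩ : ∃ C : Set (OnePoint ℂ), IsCompact C ∧ C ⊆ A₁ ∧
      ∀ B₁ B₂ : Set (OnePoint ℂ), IsOpen B₁ → IsOpen B₂ → Disjoint B₁ B₂ → C ⊆ B₁ → A₂ ⊆ B₂ →
        @Metric.hausdorffDist _ m.toPseudoMetricSpace A₁ B₁ < ε ∧
        @Metric.hausdorffDist _ m.toPseudoMetricSpace A₂ B₂ < ε ∧
        @Metric.hausdorffDist _ m.toPseudoMetricSpace J (B₁ ∪ B₂)ᶜ < ε := by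
    rw [← m.replaceTopology_eq hm.symm]
    exact @exists_isCompact_forall_hausdorffDist_lt _
      (m.replaceTopology hm.symm).toPseudoMetricSpace (inferInstanceAs (CompactSpace (OnePoint ℂ)))
      (inferInstanceAs (LocallyConnectedSpace (OnePoint ℂ))) ε hε A₁ A₂ J h₂ hdisj hJ₁ hJ₂ hcover
  exact ⟨C, hC, hCA, fun {r p w} h hCp hAw => ⟨h.isOpen_left, h.isOpen_right,
    disjoint_basin r h.ne, h.frontier_left, h.frontier_right,
    happrox _ _ h.isOpen_left h.isOpen_right (disjoint_basin r h.ne) hCp hAw⟩⟩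

section Components

variable {X : Type*} [TopologicalSpace X] {A P : Set X}

theorem exists_finite_injOn_connectedComponentIn [LocallyConnectedSpace X] {E : Set X}
    (hE : IsCompact E) (hA : IsOpen A) (hEA : E ⊆ A) :
    ∃ P ⊆ A, P.Finite ∧ InjOn (connectedComponentIn A) P ∧
      E ⊆ ⋃ q ∈ P, connectedComponentIn A q := by
  obtain ⟨t, htA, htfin, ht⟩ := hE.elim_finite_subcover_image (b := A)
    (c := connectedComponentIn A) (fun _ _ => hA.connectedComponentIn)
    (fun x hx => mem_biUnion (hEA hx) (mem_connectedComponentIn (hEA hx)))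
  obtain ⟨P, hPt, hP⟩ := exists_subset_bijOn t (connectedComponentIn A)
  refine ⟨P, hPt.trans htA, htfin.subset hPt, hP.injOn, ?_⟩
  rwa [← sUnion_image, hP.image_eq, sUnion_image]

theorem subset_biUnion_connectedComponentIn (huniq : ∀ C ∈ setComponents A, ∃! z, z ∈ P ∩ C) :
    A ⊆ ⋃ q ∈ P, connectedComponentIn A q := by
  intro x hx
  obtain ⟨q, ⟨hqP, hqx⟩, -⟩ := huniq _ ⟨x, hx, rfl⟩
  refine mem_biUnion hqP ?_
  rw [← connectedComponentIn_eq hqx]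
  exact mem_connectedComponentIn hx

theorem injOn_connectedComponentIn (hPA : P ⊆ A)
    (huniq : ∀ C ∈ setComponents A, ∃! z, z ∈ P ∩ C) : InjOn (connectedComponentIn A) P :=
  fun q hq _ hq' h => (huniq _ ⟨q, hPA hq, rfl⟩).unique ⟨hq, mem_connectedComponentIn (hPA hq)⟩
    ⟨hq', h ▸ mem_connectedComponentIn (hPA hq')⟩

theorem finite_of_injOn_connectedComponentIn (hPA : P ⊆ A)
    (hinj : InjOn (connectedComponentIn A) P) (hfin : (setComponents A).Finite) : P.Finite :=
  .of_finite_image (hfin.subset (image_subset_iff.2 fun q hq => ⟨q, hPA hq, rfl⟩)) hinj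

end Components

/-- **Theorem C**: any pair of disjoint open sets with common boundary decomposing the
sphere can be approximated by the pair of attracting basins of a rational map; moreover
the poles/preimage structure over one attracting fixed point can be prescribed. -/
theorem julia_set_approximation
    (m : MetricSpace (OnePoint ℂ)) (hm : InducesSphereTopology m)
    (ε : ℝ) (hε : 0 < ε)
    (A₁ A₂ J : Set (OnePoint ℂ))
    (h₁ : IsOpen A₁) (h₂ : IsOpen A₂)
    (hne₁ : A₁.Nonempty) (hne₂ : A₂.Nonempty)
    (hdisj : Disjoint A₁ A₂)
    (hJ₁ : frontier A₁ = J) (hJ₂ : frontier A₂ = J)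
    (hcover : A₁ ∪ A₂ ∪ J = Set.univ) :
    (∃ r : OnePoint ℂ → OnePoint ℂ, IsRationalMap r ∧
      ∃ w₁ w₂ : OnePoint ℂ, w₁ ≠ w₂ ∧ r w₁ = w₁ ∧ r w₂ = w₂ ∧
        GoodBasins m ε A₁ A₂ J r w₁ w₂) ∧
    (∀ P : Set (OnePoint ℂ), (setComponents A₁).Finite → P ⊆ A₁ →
      (∀ C ∈ setComponents A₁, ∃! z, z ∈ P ∩ C) →
      ∀ p ∈ P, ∃ r : OnePoint ℂ → OnePoint ℂ, IsRationalMap r ∧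
        r p = p ∧ r ⁻¹' {p} = P ∧
        ∃ w₂ : OnePoint ℂ, p ≠ w₂ ∧ r w₂ = w₂ ∧ GoodBasins m ε A₁ A₂ J r p w₂) := by
  obtain ⟨C, hC, hCA, happrox⟩ :=
    exists_isCompact_forall_goodBasins m hm hε h₂ hdisj hJ₁ hJ₂ hcover
  have hA₂ : A₂ ⊆ A₁ᶜ := subset_compl_iff_disjoint_left.2 hdisj
  have hinf : A₁ᶜ.Infinite := (infinite_of_isOpen_onePoint h₂ hne₂).mono hA₂
  constructor
  · obtain ⟨a, ha⟩ := hne₁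
    obtain ⟨P, hPA, hPfin, hinj, hCP⟩ :=
      exists_finite_injOn_connectedComponentIn (hC.insert a) h₁ (insert_subset ha hCA)
    obtain ⟨p, hp, -⟩ := mem_iUnion₂.1 (hCP (mem_insert a C))
    obtain ⟨r, w, hr, hsep⟩ := exists_separatesBasins_connectedComponentIn h₁ hinf hPfin hPA hinj
      hp hC ((subset_insert a C).trans hCP)
    exact ⟨r, hr, p, w, hsep.ne, hsep.map_left, hsep.map_right,
      happrox hsep.toIsBasinPair hsep.subset_left (hA₂.trans hsep.subset_right)⟩
  · intro P hfin hPA huniq p hp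
    have hinj := injOn_connectedComponentIn hPA huniq
    obtain ⟨r, w, hr, hsep⟩ := exists_separatesBasins_connectedComponentIn h₁ hinf
      (finite_of_injOn_connectedComponentIn hPA hinj hfin) hPA hinj hp hC
      (hCA.trans (subset_biUnion_connectedComponentIn huniq))
    exact ⟨r, hr, hsep.map_left, hsep.preimage_left, w, hsep.ne, hsep.map_right,
      happrox hsep.toIsBasinPair hsep.subset_left (hA₂.trans hsep.subset_right)⟩

end
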